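/- Let l ≥ 1 and let P = {P_0,…,P_{l−1}} be a partition of ω into infinite sets with min P_i < min P_j whenever i < j. Then a subset 𝓧 ⊆ 𝓔^{P'}_∞ has the property of Baire with respect to the Ellentuck topology if and only if 𝓧 is Ramsey; moreover, 𝓧 is Ellentuck-meagre if and only if 𝓧 is Ramsey null. (That is, (𝓔^{P'}_∞, ≤, r) is a topological Ramsey space.) -/

import Mathlib

open Set

namespace DualRamsey

/-- `F` is a coarsening of `E` (written `F ≤ E` in the paper): every class of `F`
is a union of classes of `E`. -/
def Coarsens {X : Type*} (F E : Setoid X) : Prop := ∀ a b, E.r a b → F.r a b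

/-- The set of equivalence classes of a setoid. -/
def classes {X : Type*} (E : Setoid X) : Set (Set X) := {C | ∃ x, C = {y | E.r x y}}

/-- The set of minimal representatives of the classes of an equivalence relation on ℕ. -/
def minReps (E : Setoid ℕ) : Set ℕ := {n | ∀ m, E.r n m → n ≤ m}

/-- `pRep E k` is `p_k(E)`, the k-th minimal representative in increasing order. -/
noncomputable def pRep (E : Setoid ℕ) (k : ℕ) : ℕ := Nat.nth (· ∈ minReps E) k

/-- `approx n E` is the n-th approximation `r_n(E)`: `E` restricted to `{0,…,p_n(E)-1}`,
identified with its graph. -/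
noncomputable def approx (n : ℕ) (E : Setoid ℕ) : Set (ℕ × ℕ) :=
  {q | q.1 < pRep E n ∧ q.2 < pRep E n ∧ E.r q.1 q.2}

/-- Basic set `[a, E]` relative to a space `S` of equivalence relations. -/
noncomputable def basicSet (S : Set (Setoid ℕ)) (a : Set (ℕ × ℕ)) (E : ↥S) : Set ↥S :=
  {F | Coarsens F.1 E.1 ∧ ∃ n, approx n F.1 = a}

/-- The Ellentuck topology on a space `S` of equivalence relations. -/
noncomputable def ellentuckTop (S : Set (Setoid ℕ)) : TopologicalSpace ↥S :=
  TopologicalSpace.generateFrom {U | ∃ a E, U = basicSet S a E}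

def IsRamsey (S : Set (Setoid ℕ)) (X : Set ↥S) : Prop :=
  ∀ (a : Set (ℕ × ℕ)) (B : ↥S), (basicSet S a B).Nonempty →
    ∃ A ∈ basicSet S a B, basicSet S a A ⊆ X ∨ basicSet S a A ∩ X = ∅

def IsRamseyNull (S : Set (Setoid ℕ)) (X : Set ↥S) : Prop :=
  ∀ (a : Set (ℕ × ℕ)) (B : ↥S), (basicSet S a B).Nonempty →
    ∃ A ∈ basicSet S a B, basicSet S a A ∩ X = ∅

/-- The property of Baire with respect to the Ellentuck topology. -/
noncomputable def HasBP (S : Set (Setoid ℕ)) (X : Set ↥S) : Prop :=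
  ∃ O M : Set ↥S, (ellentuckTop S).IsOpen O ∧ @IsMeagre _ (ellentuckTop S) M ∧
    X = (O \ M) ∪ (M \ O)

/-- The Souslin operation applied to a scheme indexed by finite sequences of naturals. -/
def souslinOp {X : Type*} (A : List ℕ → Set X) : Set X :=
  ⋃ x : ℕ → ℕ, ⋂ n : ℕ, A ((List.range n).map x)

/-- `Y` belongs to the smallest field of sets containing all `t`-open sets and
closed under the Souslin operation. -/
def SouslinMeasurable {X : Type*} (t : TopologicalSpace X) (Y : Set X) : Prop :=
  ∀ 𝒜 : Set (Set X),
    (∀ U, t.IsOpen U → U ∈ 𝒜) →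
    (∀ A ∈ 𝒜, Aᶜ ∈ 𝒜) →
    (∀ A ∈ 𝒜, ∀ B ∈ 𝒜, A ∪ B ∈ 𝒜) →
    (∀ f : List ℕ → Set X, (∀ s, f s ∈ 𝒜) → souslinOp f ∈ 𝒜) →
    Y ∈ 𝒜

/-- The graph of an equivalence relation as a boolean-valued function. -/
noncomputable def graphMap {X : Type*} (E : Setoid X) : X × X → Bool :=
  fun q => @decide (E.r q.1 q.2) (Classical.dec _)

/-- The metrizable topology on a space of equivalence relations, as a subspace of
`2^(X × X)` via graphs. -/
noncomputable def graphTop {X : Type*} (S : Set (Setoid X)) : TopologicalSpace ↥S :=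
  TopologicalSpace.induced (fun E => graphMap E.1) inferInstance

/-- `𝓔^P_∞` for a partition `P` of ℕ into `l` infinite pieces: the `P`-alternating
equivalence relations, i.e. those with infinitely many classes whose k-th minimal
representative lies in `P (k mod l)`. -/
noncomputable def EPalt (l : ℕ) (hl : 0 < l) (P : Fin l → Set ℕ) : Set (Setoid ℕ) :=
  {E | (classes E).Infinite ∧ ∀ k : ℕ, pRep E k ∈ P ⟨k % l, Nat.mod_lt k hl⟩}

/-- `𝓔^{P'}_∞`: the `P`-alternating equivalence relations such that moreover every
class whose minimum lies in `P i` is contained in `⋃_{j ≥ i} P j`. -/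
noncomputable def EPalt' (l : ℕ) (hl : 0 < l) (P : Fin l → Set ℕ) : Set (Setoid ℕ) :=
  {E | E ∈ EPalt l hl P ∧
    ∀ x ∈ minReps E, ∀ i : Fin l, x ∈ P i → ∀ y, E.r x y → ∃ j : Fin l, i ≤ j ∧ y ∈ P j}

/-!
A set is open in the Ellentuck topology exactly when it is decided, near each of its points, by a
finite approximation. Calling an approximation decided by a relation when the basic set it spans is
homogeneous or no coarsening is, one fuses coarsenings that decide more and more approximations; on
the resulting relation the pigeonhole principle for one-step extensions propagates a decision from
an approximation to all its extensions. This shows that open sets are Ramsey, and fusing countably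
many applications shows that meagre sets are Ramsey null.

For alternating equivalence relations, all axioms except the pigeonhole principle follow by splicing
minimal representatives. The pigeonhole principle may be tested on the finest alternating relation,
equality on `ℕ` with the pieces given by the residues modulo `l`, because the coarsenings of any
alternating relation are indexed by relations on its numbered classes. There a block of `l`
consecutive points is read as a letter saying how the block is absorbed by the earlier classes, so
that one-step extensions become finite words, and the claim becomes the Carlson–Simpson theorem for
infinitely many variables. The latter follows from an idempotent ultrafilter on variable words all
of whose substitution instances lie in one minimal closed left ideal of the ultrafilters on words.
-/

open scoped Topology

section AbstractEllentuck

/-- A topological Ramsey space in the sense of Todorcevic: points `R`, finite approximations `AR`,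
a quasi-order `le` on points, the `n`-th approximation `r n F`, a finitary quasi-order `leFin`, and
the axioms A1–A4 together with closedness of the space, the last in the form `exists_fusion`. -/
structure RamseySpace (R AR : Type*) where
  le : R → R → Prop
  r : ℕ → R → AR
  leFin : AR → AR → Prop
  le_refl : ∀ A, le A A
  le_trans : ∀ {A B C}, le A B → le B C → le A C
  length_eq : ∀ {n m F G}, r n F = r m G → n = m
  r_eq_of_le : ∀ {n k F G}, r n F = r n G → k ≤ n → r k F = r k G
  finite_leFin : ∀ d B, {a | leFin a (r d B)}.Finite
  exists_leFin : ∀ {F B}, le F B → ∀ n, ∃ d, leFin (r n F) (r d B)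
  exists_leFin_of_le : ∀ {F B n d k}, le F B → leFin (r n F) (r d B) → n ≤ k →
    ∃ e, d ≤ e ∧ leFin (r k F) (r e B)
  exists_extension : ∀ {F B n d}, leFin (r n F) (r d B) → ∃ G, le G B ∧ r n G = r n F
  exists_amalgam : ∀ {A B n d}, le A B → leFin (r n A) (r d B) →
    ∃ A', le A' B ∧ r d A' = r d B ∧ ∀ F, le F A' → r n F = r n A → le F A
  exists_fusion : ∀ {A : ℕ → R} {d},
    (∀ i, le (A (i + 1)) (A i) ∧ r (d + i) (A (i + 1)) = r (d + i) (A i)) →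
    ∃ C, ∀ i, le C (A i) ∧ r (d + i) C = r (d + i) (A i)
  exists_homogeneous : ∀ n B (O : Set AR), ∃ A, le A B ∧ r n A = r n B ∧
    ((∀ F, le F A → r n F = r n B → r (n + 1) F ∈ O) ∨
      ∀ F, le F A → r n F = r n B → r (n + 1) F ∉ O)

namespace RamseySpace

variable {R AR : Type*} (S : RamseySpace R AR)

/-- The basic set `[a, E]` of the Ellentuck topology. -/
def basic (a : AR) (E : R) : Set R := {F | S.le F E ∧ ∃ n, S.r n F = a}

/-- The Ellentuck topology. -/
@[reducible] def ellentuck : TopologicalSpace R :=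
  TopologicalSpace.generateFrom {U | ∃ a E, U = S.basic a E}

/-- Ramsey subsets of a Ramsey space. -/
def Ramsey (X : Set R) : Prop := ∀ a B, (S.basic a B).Nonempty →
  ∃ A ∈ S.basic a B, S.basic a A ⊆ X ∨ S.basic a A ∩ X = ∅

/-- Ramsey null subsets of a Ramsey space. -/
def RamseyNull (X : Set R) : Prop := ∀ a B, (S.basic a B).Nonempty →
  ∃ A ∈ S.basic a B, S.basic a A ∩ X = ∅

variable {S} {A B E F G : R} {X Y O : Set R} {a : AR} {n k : ℕ}

lemma mem_basic_approx : G ∈ S.basic (S.r n F) E ↔ S.le G E ∧ S.r n G = S.r n F := by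
  refine and_congr_right fun _ => ⟨fun ⟨m, hm⟩ => ?_, fun h => ⟨n, h⟩⟩
  obtain rfl := S.length_eq hm
  exact hm

lemma self_mem_basic (A : R) (n : ℕ) : A ∈ S.basic (S.r n A) A := ⟨S.le_refl A, n, rfl⟩

lemma basic_subset_of_le (h : S.le A B) : S.basic a A ⊆ S.basic a B :=
  fun _ hF => ⟨S.le_trans hF.1 h, hF.2⟩

lemma basic_approx_anti (h : k ≤ n) : S.basic (S.r n F) E ⊆ S.basic (S.r k F) E := fun _ hG =>
  mem_basic_approx.2 ⟨hG.1, S.r_eq_of_le (mem_basic_approx.1 hG).2 h⟩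

/-! ### Diagonalization -/

variable {Φ : ℕ → AR → Set R → Prop}

lemma exists_forall_leFin (anti : ∀ n a, Antitone (Φ n a))
    (dense : ∀ n F, ∃ A, S.le A F ∧ S.r n A = S.r n F ∧ Φ n (S.r n F) (S.basic (S.r n F) A))
    (B : R) (d : ℕ) : ∃ A, S.le A B ∧ S.r d A = S.r d B ∧ ∀ n F, S.le F A →
      S.leFin (S.r n F) (S.r d B) → Φ n (S.r n F) (S.basic (S.r n F) A) := by
  suffices key : ∀ s ⊆ {a | S.leFin a (S.r d B)}, ∃ A, S.le A B ∧ S.r d A = S.r d B ∧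
      ∀ n F, S.le F A → S.r n F ∈ s → Φ n (S.r n F) (S.basic (S.r n F) A) from key _ subset_rfl
  intro s hs
  induction s, (S.finite_leFin d B).subset hs using Set.Finite.induction_on with
  | empty => exact ⟨B, S.le_refl B, rfl, fun _ _ _ h => absurd h (notMem_empty _)⟩
  | @insert a s _ _ ih =>
    obtain ⟨A, hAB, hrA, hA⟩ := ih ((subset_insert _ _).trans hs)
    by_cases ha : ∃ n F, S.le F A ∧ S.r n F = a
    · obtain ⟨n, F, hFA, rfl⟩ := ha
      obtain ⟨A₁, hA₁F, hrA₁, hΦ⟩ := dense n F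
      have hfin : S.leFin (S.r n A₁) (S.r d A) := by
        rw [hrA₁, hrA]; exact hs (mem_insert _ _)
      obtain ⟨A₂, hA₂A, hrA₂, hA₂⟩ := S.exists_amalgam (S.le_trans hA₁F hFA) hfin
      refine ⟨A₂, S.le_trans hA₂A hAB, hrA₂.trans hrA, fun m G hG hm => ?_⟩
      rcases hm with hm | hm
      · obtain rfl := S.length_eq hm
        rw [hm]
        refine anti _ _ (fun H hH => ?_) hΦ
        obtain ⟨hHA₂, hrH⟩ := mem_basic_approx.1 hH
        exact mem_basic_approx.2 ⟨hA₂ H hHA₂ (hrH.trans hrA₁.symm), hrH⟩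
      · exact anti _ _ (basic_subset_of_le hA₂A) (hA m G (S.le_trans hG hA₂A) hm)
    · refine ⟨A, hAB, hrA, fun m G hG hm => ?_⟩
      rcases hm with hm | hm
      · exact absurd ⟨m, G, hG, hm⟩ ha
      · exact hA m G hG hm

lemma exists_forall_leFin_ge (anti : ∀ n a, Antitone (Φ n a))
    (dense : ∀ n F, ∃ A, S.le A F ∧ S.r n A = S.r n F ∧ Φ n (S.r n F) (S.basic (S.r n F) A))
    (B : R) (d : ℕ) : ∃ A, S.le A B ∧ S.r d A = S.r d B ∧ ∀ n F e, S.le F A → d ≤ e →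
      S.leFin (S.r n F) (S.r e A) → Φ n (S.r n F) (S.basic (S.r n F) A) := by
  choose next next_le r_next hnext using exists_forall_leFin anti dense
  let A : ℕ → R := fun i => Nat.rec B (fun i C => next C (d + i)) i
  obtain ⟨C, hC⟩ := S.exists_fusion (A := A) fun i => ⟨next_le (A i) _, r_next (A i) _⟩
  refine ⟨C, (hC 0).1, (hC 0).2, fun n F e hFC hde hfin => ?_⟩
  obtain ⟨i, rfl⟩ := Nat.exists_eq_add_of_le hde
  rw [(hC i).2] at hfin
  have hCA := (hC (i + 1)).1
  exact anti _ _ (basic_subset_of_le hCA) (hnext (A i) _ n F (S.le_trans hFC hCA) hfin)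

theorem exists_diagonal (anti : ∀ n a, Antitone (Φ n a))
    (dense : ∀ n F, ∃ A, S.le A F ∧ S.r n A = S.r n F ∧ Φ n (S.r n F) (S.basic (S.r n F) A))
    (hFB : S.le F B) (n : ℕ) : ∃ A, S.le A B ∧ S.r n A = S.r n F ∧ ∀ G, S.le G A →
      S.r n G = S.r n F → ∀ k, n ≤ k → Φ k (S.r k G) (S.basic (S.r k G) A) := by
  obtain ⟨d, hd⟩ := S.exists_leFin hFB n
  obtain ⟨C, hCB, hrC, hC⟩ := exists_forall_leFin_ge anti dense B d
  rw [← hrC] at hd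
  obtain ⟨A, hAC, hrA⟩ := S.exists_extension hd
  refine ⟨A, S.le_trans hAC hCB, hrA, fun G hGA hrG k hk => ?_⟩
  have hGC := S.le_trans hGA hAC
  obtain ⟨e, hde, he⟩ := S.exists_leFin_of_le hGC (hrG ▸ hd) hk
  exact anti _ _ (basic_subset_of_le hAC) (hC k G e hGC hde he)

/-! ### Open sets are Ramsey -/

lemma exists_accepts_or_rejects (O : Set R) (hFB : S.le F B) (n : ℕ) :
    ∃ A, S.le A B ∧ S.r n A = S.r n F ∧ ∀ G, S.le G A → S.r n G = S.r n F → ∀ k, n ≤ k →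
      S.basic (S.r k G) A ⊆ O ∨
        ∀ H ∈ S.basic (S.r k G) A, ¬ S.basic (S.r k G) H ⊆ O := by
  refine exists_diagonal (Φ := fun _ a U => U ⊆ O ∨ ∀ H ∈ U, ¬ S.basic a H ⊆ O) ?_ ?_ hFB n
  · exact fun _ _ U V hUV => Or.imp hUV.trans fun h H hH => h H (hUV hH)
  · intro k G
    by_cases h : ∃ A ∈ S.basic (S.r k G) G, S.basic (S.r k G) A ⊆ O
    · obtain ⟨A, hA, hAO⟩ := h
      obtain ⟨hAG, hrA⟩ := mem_basic_approx.1 hA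
      exact ⟨A, hAG, hrA, Or.inl hAO⟩
    · push Not at h
      exact ⟨G, S.le_refl G, rfl, Or.inr h⟩

lemma exists_homogeneous_successors (O : Set AR) (hFB : S.le F B) (n : ℕ) :
    ∃ A, S.le A B ∧ S.r n A = S.r n F ∧ ∀ G, S.le G A → S.r n G = S.r n F → ∀ k, n ≤ k →
      (∀ H ∈ S.basic (S.r k G) A, S.r (k + 1) H ∈ O) ∨
        ∀ H ∈ S.basic (S.r k G) A, S.r (k + 1) H ∉ O := by
  refine exists_diagonal (Φ := fun k _ U => (∀ H ∈ U, S.r (k + 1) H ∈ O) ∨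
    ∀ H ∈ U, S.r (k + 1) H ∉ O) ?_ ?_ hFB n
  · exact fun _ _ U V hUV => Or.imp (fun h H hH => h H (hUV hH)) fun h H hH => h H (hUV hH)
  · intro k G
    obtain ⟨A, hAG, hrA, hA⟩ := S.exists_homogeneous k G O
    refine ⟨A, hAG, hrA, hA.imp ?_ ?_⟩ <;>
      exact fun h H hH => h H (mem_basic_approx.1 hH).1 (mem_basic_approx.1 hH).2

lemma ramsey_of_forall_basic_subset (hO : ∀ F ∈ O, ∃ k, S.basic (S.r k F) F ⊆ O) :
    S.Ramsey O := by
  rintro _ B ⟨F₀, hF₀B, n, rfl⟩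
  obtain ⟨A₁, hA₁B, hrA₁, hdecided⟩ := exists_accepts_or_rejects O hF₀B n
  by_cases hacc : S.basic (S.r n F₀) A₁ ⊆ O
  · exact ⟨A₁, ⟨hA₁B, n, hrA₁⟩, Or.inl hacc⟩
  obtain ⟨A₂, hA₂A₁, hrA₂, hsucc⟩ :=
    exists_homogeneous_successors {a | S.basic a A₁ ⊆ O} (S.le_refl A₁) n
  rw [hrA₁] at hrA₂ hsucc
  have reject : ∀ F, S.le F A₂ → S.r n F = S.r n F₀ → ∀ k, n ≤ k →
      ¬ S.basic (S.r k F) A₁ ⊆ O := by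
    intro F hFA₂ hrF k hk
    have hFA₁ := S.le_trans hFA₂ hA₂A₁
    induction k, hk using Nat.le_induction with
    | base => rwa [hrF]
    | succ k hk ih =>
      refine (hsucc F hFA₂ hrF k hk).elim (fun hall => ?_) fun hnone =>
        hnone F (mem_basic_approx.2 ⟨hFA₂, rfl⟩)
      refine absurd ?_ ((hdecided F hFA₁ hrF k hk).resolve_left ih F
        (mem_basic_approx.2 ⟨hFA₁, rfl⟩))
      exact fun G hG => hall G (basic_subset_of_le hFA₂ hG) ⟨S.le_trans hG.1 hFA₁, k + 1, rfl⟩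
  refine ⟨A₂, ⟨S.le_trans hA₂A₁ hA₁B, n, hrA₂⟩, Or.inr ?_⟩
  refine eq_empty_of_forall_notMem fun F ⟨hF, hFO⟩ => ?_
  obtain ⟨hFA₂, hrF⟩ := mem_basic_approx.1 hF
  have hFA₁ := S.le_trans hFA₂ hA₂A₁
  obtain ⟨k, hk⟩ := hO F hFO
  have hnk := le_max_left n k
  exact (hdecided F hFA₁ hrF _ hnk).resolve_left (reject F hFA₂ hrF _ hnk) F
    (mem_basic_approx.2 ⟨hFA₁, rfl⟩) ((basic_approx_anti (le_max_right n k)).trans hk)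

/-! ### The ideal of Ramsey null sets -/

lemma RamseyNull.mono (h : X ⊆ Y) (hY : S.RamseyNull Y) : S.RamseyNull X := by
  intro a B hB
  obtain ⟨A, hA, hAY⟩ := hY a B hB
  exact ⟨A, hA, subset_eq_empty (inter_subset_inter_right _ h) hAY⟩

lemma RamseyNull.exists_le (hX : S.RamseyNull X) (n : ℕ) (F : R) :
    ∃ A, S.le A F ∧ S.r n A = S.r n F ∧ S.basic (S.r n F) A ∩ X = ∅ := by
  obtain ⟨A, hA, hAX⟩ := hX _ _ ⟨F, self_mem_basic F n⟩
  obtain ⟨hAF, hrA⟩ := mem_basic_approx.1 hA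
  exact ⟨A, hAF, hrA, hAX⟩

lemma RamseyNull.union (hX : S.RamseyNull X) (hY : S.RamseyNull Y) : S.RamseyNull (X ∪ Y) := by
  rintro _ B ⟨F, hFB, n, rfl⟩
  obtain ⟨A, hAF, hrA, hAX⟩ := hX.exists_le n F
  obtain ⟨C, hCA, hrC, hCY⟩ := hY.exists_le n A
  rw [hrA] at hrC hCY
  refine ⟨C, ⟨S.le_trans hCA (S.le_trans hAF hFB), n, hrC⟩, ?_⟩
  rw [inter_union_distrib_left, hCY, union_empty]
  exact subset_eq_empty (inter_subset_inter_left _ (basic_subset_of_le hCA)) hAX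

lemma RamseyNull.biUnion_le {X : ℕ → Set R} (hX : ∀ i, S.RamseyNull (X i)) (k : ℕ) :
    S.RamseyNull (⋃ i ≤ k, X i) := by
  induction k with
  | zero => simpa only [Nat.le_zero, iUnion_iUnion_eq_left] using hX 0
  | succ k ih => rw [biUnion_le_succ]; exact ih.union (hX _)

lemma RamseyNull.iUnion {X : ℕ → Set R} (hX : ∀ i, S.RamseyNull (X i)) :
    S.RamseyNull (⋃ i, X i) := by
  rintro _ B ⟨F, hFB, n, rfl⟩
  obtain ⟨A, hAB, hrA, hA⟩ := exists_diagonal (Φ := fun k _ U => U ∩ ⋃ i ≤ k, X i = ∅)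
    (fun _ _ U V hUV h => subset_eq_empty (inter_subset_inter_left _ hUV) h)
    (fun k => (RamseyNull.biUnion_le hX k).exists_le k) hFB n
  refine ⟨A, ⟨hAB, n, hrA⟩, eq_empty_of_forall_notMem fun G ⟨hG, hGX⟩ => ?_⟩
  obtain ⟨hGA, hrG⟩ := mem_basic_approx.1 hG
  obtain ⟨i, hi⟩ := mem_iUnion.1 hGX
  exact eq_empty_iff_forall_notMem.1 (hA G hGA hrG _ (le_max_left n i)) G
    ⟨⟨hGA, _, rfl⟩, mem_biUnion (le_max_right n i) hi⟩

/-! ### The Ellentuck theorem -/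

lemma isOpen_basic (a : AR) (E : R) : IsOpen[S.ellentuck] (S.basic a E) :=
  TopologicalSpace.isOpen_generateFrom_of_mem ⟨a, E, rfl⟩

lemma basic_subset_basic (h : F ∈ S.basic a E) : ∃ k, S.basic (S.r k F) F ⊆ S.basic a E := by
  obtain ⟨hFE, n, rfl⟩ := h
  exact ⟨n, basic_subset_of_le hFE⟩

lemma exists_basic_subset_of_isOpen {U : Set R} (hU : IsOpen[S.ellentuck] U) (hF : F ∈ U) :
    ∃ k, S.basic (S.r k F) F ⊆ U := by
  induction hU with
  | basic V hV =>
    obtain ⟨a, E, rfl⟩ := hV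
    exact basic_subset_basic hF
  | univ => exact ⟨0, subset_univ _⟩
  | inter V W _ _ ihV ihW =>
    obtain ⟨j, hj⟩ := ihV hF.1
    obtain ⟨k, hk⟩ := ihW hF.2
    exact ⟨max j k, subset_inter ((basic_approx_anti (le_max_left j k)).trans hj)
      ((basic_approx_anti (le_max_right j k)).trans hk)⟩
  | sUnion C _ ih =>
    obtain ⟨V, hV, hFV⟩ := hF
    obtain ⟨k, hk⟩ := ih V hV hFV
    exact ⟨k, hk.trans (subset_sUnion_of_mem hV)⟩

lemma ramsey_of_isOpen (hO : IsOpen[S.ellentuck] O) : S.Ramsey O :=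
  ramsey_of_forall_basic_subset fun _ => exists_basic_subset_of_isOpen hO

lemma RamseyNull.isNowhereDense (hX : S.RamseyNull X) : @IsNowhereDense R S.ellentuck X := by
  let _ := S.ellentuck
  refine eq_empty_of_forall_notMem fun F hF => ?_
  obtain ⟨k, hk⟩ := exists_basic_subset_of_isOpen isOpen_interior hF
  obtain ⟨A, hAF, hrA, hAX⟩ := hX.exists_le k F
  have hA : A ∈ closure X := interior_subset (hk ⟨hAF, k, hrA⟩)
  exact (mem_closure_iff.1 hA _ (isOpen_basic _ A) ⟨S.le_refl A, k, hrA⟩).ne_empty hAX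

lemma ramseyNull_of_isNowhereDense (hX : @IsNowhereDense R S.ellentuck X) :
    S.RamseyNull X := by
  let _ := S.ellentuck
  intro a B hB
  obtain ⟨A, hA, hsub | hdisj⟩ := ramsey_of_isOpen isClosed_closure.isOpen_compl a B hB
  · exact ⟨A, hA, (disjoint_compl_left.mono hsub subset_closure).inter_eq⟩
  · have hA' : A ∈ interior (closure X) := interior_maximal
      (disjoint_compl_right_iff_subset.1 (disjoint_iff_inter_eq_empty.2 hdisj))
      (isOpen_basic a A) ⟨S.le_refl A, hA.2⟩
    rw [hX] at hA'
    exact absurd hA' (notMem_empty A)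

theorem isMeagre_iff_ramseyNull : @IsMeagre R S.ellentuck X ↔ S.RamseyNull X := by
  let _ := S.ellentuck
  refine ⟨fun hX => ?_, fun hX => hX.isNowhereDense.isMeagre⟩
  obtain ⟨C, hC, hcount, hXC⟩ := isMeagre_iff_countable_union_isNowhereDense.1 hX
  obtain ⟨f, hf⟩ := (hcount.insert ∅).exists_eq_range (insert_nonempty _ _)
  refine .mono (hXC.trans (sUnion_mono (subset_insert ∅ C))) ?_
  rw [hf, sUnion_range]
  refine .iUnion fun i => ramseyNull_of_isNowhereDense ?_
  rcases hf.ge (mem_range_self i) with hi | hi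
  · exact hi ▸ isNowhereDense_empty
  · exact hC _ hi

theorem baire_iff_ramsey : (∃ O M : Set R, S.ellentuck.IsOpen O ∧ @IsMeagre R S.ellentuck M ∧
    X = (O \ M) ∪ (M \ O)) ↔ S.Ramsey X := by
  let _ := S.ellentuck
  constructor
  · rintro ⟨O, M, hO, hM, rfl⟩ _ B ⟨F, hFB, n, rfl⟩
    obtain ⟨A, hAF, hrA, hAM⟩ := (isMeagre_iff_ramseyNull.1 hM).exists_le n F
    obtain ⟨C, ⟨hCA, hC⟩, h⟩ := ramsey_of_isOpen hO (S.r n F) A ⟨A, S.le_refl A, n, hrA⟩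
    have hCM : Disjoint (S.basic (S.r n F) C) M :=
      (disjoint_iff_inter_eq_empty.2 hAM).mono_left (basic_subset_of_le hCA)
    refine ⟨C, ⟨S.le_trans hCA (S.le_trans hAF hFB), hC⟩, h.imp (fun hCO => ?_) fun hCO => ?_⟩
    · exact (subset_sdiff.2 ⟨hCO, hCM⟩).trans subset_union_left
    · rw [← disjoint_iff_inter_eq_empty] at hCO ⊢
      exact (hCO.mono_right sdiff_subset).union_right (hCM.mono_right sdiff_subset)
  · intro hX
    refine ⟨interior X, X \ interior X, isOpen_interior, isMeagre_iff_ramseyNull.2 ?_, ?_⟩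
    · intro a B hB
      obtain ⟨A, hA, hsub | hdisj⟩ := hX a B hB
      · have hint : S.basic a A ⊆ interior X := interior_maximal hsub (isOpen_basic a A)
        exact ⟨A, hA, (disjoint_sdiff_right.mono_left hint).inter_eq⟩
      · exact ⟨A, hA, subset_eq_empty (inter_subset_inter_right _ sdiff_subset) hdisj⟩
    · rw [sdiff_eq_left.2 disjoint_sdiff_right, sdiff_eq_left.2 disjoint_sdiff_left,
        union_sdiff_cancel interior_subset]

end RamseySpace

end AbstractEllentuck

section CarlsonSimpson

open Filter

theorem exists_isClosed_minimal_left_ideal {M : Type*} [Semigroup M] [TopologicalSpace M]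
    [CompactSpace M] [T2Space M] [Nonempty M] (hmul : ∀ q : M, Continuous (· * q)) :
    ∃ L : Set M, IsClosed L ∧ L.Nonempty ∧ (∀ p, ∀ q ∈ L, p * q ∈ L) ∧
      ∀ p ∈ L, ∀ q ∈ L, ∃ s, s * p = q := by
  let C : Set (Set M) := {N | IsClosed N ∧ N.Nonempty ∧ ∀ p, ∀ q ∈ N, p * q ∈ N}
  obtain ⟨L, hL⟩ : ∃ L, Minimal (· ∈ C) L := by
    refine zorn_superset _ fun c hcC hchain =>
      ⟨⋂₀ c, ⟨isClosed_sInter fun N hN => (hcC hN).1, ?_, fun p q hq N hN =>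
        (hcC hN).2.2 p q (hq N hN)⟩, fun N hN => sInter_subset_of_mem hN⟩
    obtain rfl | hne := c.eq_empty_or_nonempty
    · rw [sInter_empty]
      exact univ_nonempty
    · have := hne.to_subtype
      rw [sInter_eq_iInter]
      exact IsCompact.nonempty_iInter_of_directed_nonempty_isCompact_isClosed _
        (DirectedOn.directed_val (IsChain.directedOn hchain.symm)) (fun N => (hcC N.2).2.1)
        (fun N => (hcC N.2).1.isCompact) fun N => (hcC N.2).1
  obtain ⟨hclosed, hne, hideal⟩ := hL.prop
  refine ⟨L, hclosed, hne, hideal, fun p hp q hq => ?_⟩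
  have hrange : range (· * p) = L := by
    refine hL.eq_of_subset ⟨(isCompact_range (hmul p)).isClosed, range_nonempty _, ?_⟩ ?_
    · rintro s _ ⟨t, rfl⟩
      exact ⟨s * t, mul_assoc _ _ _⟩
    · rintro _ ⟨t, rfl⟩
      exact hideal _ _ hp
  exact hrange.ge hq

attribute [local instance] Ultrafilter.semigroup

lemma map_mul_ultrafilter {M N : Type*} [Semigroup M] [Semigroup N] (f : M →ₙ* N)
    (p q : Ultrafilter M) : (p * q).map f = p.map f * q.map f := by
  refine Ultrafilter.coe_inj.mp <| Filter.ext' fun P => ?_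
  simp only [Ultrafilter.coe_map, Filter.eventually_map, Ultrafilter.eventually_mul, map_mul]

variable {α : Type*}

/-- The word obtained from a variable word over `α`, where `none` is the variable, by substituting
the letter `σ` for the variable. -/
def substLetter (σ : α) : FreeMonoid (Option α) →* FreeMonoid α := FreeMonoid.map (·.getD σ)

/-- The left variable words: those whose first letter is the variable. -/
def leftVariableWords (α : Type*) : Set (FreeMonoid (Option α)) :=
  range (FreeMonoid.of none * ·)

lemma substLetter_map_some (σ : α) (w : FreeMonoid α) :
    substLetter σ (FreeMonoid.map some w) = w := by
  rw [substLetter, FreeMonoid.map_map]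
  exact List.map_id w

lemma eventually_leftVariableWords_mul {p : Ultrafilter (FreeMonoid (Option α))}
    (hp : ∀ᶠ x in p, x ∈ leftVariableWords α) (q : Ultrafilter (FreeMonoid (Option α))) :
    ∀ᶠ x in (p * q : Ultrafilter _), x ∈ leftVariableWords α := by
  rw [Ultrafilter.eventually_mul]
  filter_upwards [hp] with x hx
  obtain ⟨y, rfl⟩ := hx
  exact .of_forall fun w => ⟨y * w, (mul_assoc _ _ _).symm⟩

lemma exists_idempotent_leftVariableWords (e : Ultrafilter (FreeMonoid (Option α))) :
    ∃ z y : Ultrafilter (FreeMonoid (Option α)), z * z = z ∧ y * e = z ∧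
      ∀ᶠ x in z, x ∈ leftVariableWords α := by
  let K : Set (Ultrafilter (FreeMonoid (Option α))) := {p | leftVariableWords α ∈ p}
  have hK : K.Nonempty := ⟨pure (FreeMonoid.of none), Ultrafilter.mem_pure.2 ⟨1, mul_one _⟩⟩
  obtain ⟨z, ⟨y, hy, rfl⟩, hzz⟩ := exists_idempotent_in_compact_subsemigroup
    Ultrafilter.continuous_mul_left ((· * e) '' K) (hK.image _)
    ((ultrafilter_isClosed_basic _).isCompact.image (Ultrafilter.continuous_mul_left e))
    (by
      rintro _ ⟨p, hp, rfl⟩ _ ⟨q, -, rfl⟩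
      exact ⟨p * e * q,
        eventually_leftVariableWords_mul (eventually_leftVariableWords_mul hp e) q,
        by simp only [mul_assoc]⟩)
  exact ⟨_, y, hzz, rfl, eventually_leftVariableWords_mul hy e⟩

/- All the idempotents below lie in one minimal closed left ideal of the ultrafilters on
`FreeMonoid α`, and idempotents of a minimal left ideal are right identities of that ideal. -/
theorem exists_ultrafilter_substLetter (α : Type*) :
    ∃ (e : Ultrafilter (FreeMonoid α)) (z : Ultrafilter (FreeMonoid (Option α))),
      (∀ᶠ x in z, x ∈ leftVariableWords α) ∧ (∀ σ, e * z.map (substLetter σ) = e) ∧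
      ∀ σ τ, z.map (substLetter σ) * z.map (substLetter τ) = z.map (substLetter σ) := by
  obtain ⟨L, hclosed, hne, hideal, hmin⟩ := exists_isClosed_minimal_left_ideal
    (M := Ultrafilter (FreeMonoid α)) Ultrafilter.continuous_mul_left
  obtain ⟨e, he, -⟩ := exists_idempotent_in_compact_subsemigroup
    Ultrafilter.continuous_mul_left L hne hclosed.isCompact fun p _ q hq => hideal p q hq
  obtain ⟨z, y, hzz, hyz, hz⟩ :=
    exists_idempotent_leftVariableWords (e.map (FreeMonoid.map some))
  have map_subst (σ : α) (p q : Ultrafilter (FreeMonoid (Option α))) :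
      (p * q).map (substLetter σ) = p.map (substLetter σ) * q.map (substLetter σ) :=
    map_mul_ultrafilter (substLetter σ : FreeMonoid (Option α) →ₙ* FreeMonoid α) p q
  have hzL (σ : α) : z.map (substLetter σ) ∈ L := by
    have he' : (e.map (FreeMonoid.map some)).map (substLetter σ) = e := by
      rw [Ultrafilter.map_map, Function.comp_def, funext (substLetter_map_some σ)]
      exact Ultrafilter.map_id e
    rw [← hyz, map_subst, he']
    exact hideal _ _ he
  have hright (p) (hp : p ∈ L) (σ : α) : p * z.map (substLetter σ) = p := by
    obtain ⟨s, rfl⟩ := hmin _ (hzL σ) p hp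
    rw [mul_assoc, ← map_subst, hzz]
  exact ⟨e, z, hz, hright e he, fun σ => hright _ (hzL σ)⟩

/-- The words of `A` all of whose extensions by `z`-most substituted variable words stay in `A`;
this plays the role of the set `A*` of Galvin's proof of Hindman's theorem. -/
def stablePart (z : Ultrafilter (FreeMonoid (Option α))) (A : Set (FreeMonoid α)) :
    Set (FreeMonoid α) :=
  {w | w ∈ A ∧ ∀ σ, ∀ᶠ x in z, w * substLetter σ x ∈ A}

lemma stablePart_nonempty [Finite α] {e : Ultrafilter (FreeMonoid α)}
    {z : Ultrafilter (FreeMonoid (Option α))} (hez : ∀ σ, e * z.map (substLetter σ) = e)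
    {A : Set (FreeMonoid α)} (hA : ∀ᶠ w in e, w ∈ A) : (stablePart z A).Nonempty := by
  have hstable (σ : α) : ∀ᶠ w in e, ∀ᶠ x in z, w * substLetter σ x ∈ A := by
    rw [← hez σ, Ultrafilter.eventually_mul] at hA
    exact hA
  exact (hA.and (eventually_all.2 hstable)).exists

lemma eventually_mul_mem_stablePart [Finite α] {z : Ultrafilter (FreeMonoid (Option α))}
    (hz : ∀ σ τ, z.map (substLetter σ) * z.map (substLetter τ) = z.map (substLetter σ))
    {A : Set (FreeMonoid α)} {w : FreeMonoid α} (hw : w ∈ stablePart z A) (σ : α) :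
    ∀ᶠ x in z, w * substLetter σ x ∈ stablePart z A := by
  have hstable (τ : α) : ∀ᶠ x in z, ∀ᶠ y in z, w * substLetter σ x * substLetter τ y ∈ A := by
    have hmem : ∀ᶠ v in z.map (substLetter σ), w * v ∈ A := hw.2 σ
    rw [← hz σ τ, Ultrafilter.eventually_mul] at hmem
    simp only [mul_assoc]
    exact hmem
  exact (hw.2 σ).and (eventually_all.2 hstable)

lemma exists_leftVariableWord_mul_mem [Finite α] {z : Ultrafilter (FreeMonoid (Option α))}
    (hzL : ∀ᶠ x in z, x ∈ leftVariableWords α)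
    (hz : ∀ σ τ, z.map (substLetter σ) * z.map (substLetter τ) = z.map (substLetter σ))
    {A : Set (FreeMonoid α)} {s : Set (FreeMonoid α)} (hs : s.Finite)
    (hsA : s ⊆ stablePart z A) :
    ∃ x ∈ leftVariableWords α, ∀ w ∈ s, ∀ σ, w * substLetter σ x ∈ stablePart z A := by
  have hall : ∀ᶠ x in z, ∀ w ∈ s, ∀ σ, w * substLetter σ x ∈ stablePart z A :=
    (eventually_all_finite hs).2 fun w hw =>
      eventually_all.2 (eventually_mul_mem_stablePart hz (hsA hw))
  exact (hzL.and hall).exists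

/-- The word obtained from a word with variables numbered by `ℕ` by substituting the letter `ρ v`
for the variable `v`. -/
def instantiate (ρ : ℕ → α) (x : List (α ⊕ ℕ)) : List α := x.map (Sum.elim id ρ)

/-- A finite variable word in which each variable is numbered by the position of its first
occurrence, and every instance of the part preceding such a first occurrence is in `A`. -/
def IsGoodWord (A : Set (List α)) (x : List (α ⊕ ℕ)) : Prop :=
  ∀ u v, x[u]? = some (.inr v) →
    v ≤ u ∧ x[v]? = some (.inr v) ∧ ∀ ρ, instantiate ρ (x.take v) ∈ A

/-- An infinite word with infinitely many variables, each variable being numbered by the position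
of its first occurrence. -/
def IsVariableWord (W : ℕ → α ⊕ ℕ) : Prop :=
  (∀ u v, W u = .inr v → v ≤ u ∧ W v = .inr v) ∧ {v | W v = .inr v}.Infinite

lemma isGoodWord_append {A : Set (List α)} {x d : List (α ⊕ ℕ)} (hx : IsGoodWord A x)
    (hxA : ∀ ρ, instantiate ρ x ∈ A) (hd : ∀ v, .inr v ∈ d → v = x.length)
    (hxd : (x ++ d)[x.length]? = some (.inr x.length)) : IsGoodWord A (x ++ d) := by
  intro u v h
  rcases lt_or_ge u x.length with hu | hu
  · rw [List.getElem?_append_left hu] at h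
    obtain ⟨hvu, hv, hA⟩ := hx u v h
    have hvc := hvu.trans_lt hu
    rw [List.getElem?_append_left hvc, List.take_append_of_le_length hvc.le]
    exact ⟨hvu, hv, hA⟩
  · rw [List.getElem?_append_right hu] at h
    obtain rfl := hd v (List.mem_of_getElem? h)
    rw [List.take_left]
    exact ⟨hu, hxd, hxA⟩

lemma finite_range_instantiate [Finite α] (x : List (α ⊕ ℕ)) :
    (range fun ρ => instantiate ρ x).Finite :=
  (List.finite_length_eq α x.length).subset (range_subset_iff.2 fun _ => List.length_map _)

lemma exists_isGoodWord_append [Finite α] {z : Ultrafilter (FreeMonoid (Option α))}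
    (hzL : ∀ᶠ x in z, x ∈ leftVariableWords α)
    (hz : ∀ σ τ, z.map (substLetter σ) * z.map (substLetter τ) = z.map (substLetter σ))
    {A : Set (List α)} {x : List (α ⊕ ℕ)} (hx : IsGoodWord A x)
    (hxA : ∀ ρ, instantiate ρ x ∈ stablePart z A) :
    ∃ d, (x ++ d)[x.length]? = some (.inr x.length) ∧ IsGoodWord A (x ++ d) ∧
      ∀ ρ, instantiate ρ (x ++ d) ∈ stablePart z A := by
  obtain ⟨_, ⟨y, rfl⟩, hy⟩ := exists_leftVariableWord_mul_mem hzL hz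
    (finite_range_instantiate x) (range_subset_iff.2 hxA)
  let tag : Option α → α ⊕ ℕ := fun o => o.elim (.inr x.length) .inl
  let d := (none :: FreeMonoid.toList y).map tag
  have hd : (x ++ d)[x.length]? = some (.inr x.length) := by
    simp [d, tag]
  refine ⟨d, hd, isGoodWord_append hx (fun ρ => (hxA ρ).1) (fun v hv => ?_) hd, fun ρ => ?_⟩
  · obtain ⟨_ | a, -, ho⟩ := List.mem_map.1 hv
    · exact (Sum.inr_injective ho).symm
    · exact absurd ho Sum.inl_ne_inr
  · have htag : Sum.elim id ρ ∘ tag = (·.getD (ρ x.length)) := by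
      funext o
      cases o <;> rfl
    have hinst : instantiate ρ (x ++ d) = instantiate ρ x ++
        (none :: FreeMonoid.toList y).map (·.getD (ρ x.length)) := by
      rw [instantiate, List.map_append, List.map_map, htag, ← instantiate]
    rw [hinst]
    exact hy _ ⟨ρ, rfl⟩ (ρ x.length)

lemma exists_eq_map_range {β : Type*} {x : ℕ → List β} (hpre : ∀ k, x k <+: x (k + 1))
    (hlen : StrictMono fun k => (x k).length) :
    ∃ W : ℕ → β, ∀ k, x k = (List.range (x k).length).map W := by
  have hlt (u) : u < (x (u + 1)).length := (Nat.lt_succ_self u).trans_le (hlen.id_le (u + 1))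
  have hmono {i k} (hik : i ≤ k) : x i <+: x k :=
    Nat.rel_of_forall_rel_succ_of_le (· <+: ·) hpre hik
  refine ⟨fun u => (x (u + 1))[u]'(hlt u), fun k => List.ext_getElem (by simp) fun u hu _ => ?_⟩
  rw [List.getElem_map, List.getElem_range]
  rcases le_total k (u + 1) with h | h
  · exact (hmono h).getElem hu
  · exact ((hmono h).getElem (hlt u)).symm

lemma isVariableWord_of_isGoodWord {A : Set (List α)} {x : ℕ → List (α ⊕ ℕ)} {W : ℕ → α ⊕ ℕ}
    (hW : ∀ k, x k = (List.range (x k).length).map W) (hlen : StrictMono fun k => (x k).length)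
    (hvar : ∀ k, (x (k + 1))[(x k).length]? = some (.inr (x k).length))
    (hgood : ∀ k, IsGoodWord A (x k)) :
    IsVariableWord W ∧
      ∀ v, W v = .inr v → ∀ ρ, instantiate ρ ((List.range v).map W) ∈ A := by
  have hget {k u : ℕ} (hu : u < (x k).length) : (x k)[u]? = some (W u) := by
    rw [hW k, List.getElem?_map, List.getElem?_range hu, Option.map_some]
  have hlt (u) : u < (x (u + 1)).length := (Nat.lt_succ_self u).trans_le (hlen.id_le (u + 1))
  have key (u v) (h : W u = .inr v) := hgood (u + 1) u v ((hget (hlt u)).trans (congrArg some h))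
  refine ⟨⟨fun u v h => ?_, ?_⟩, fun v h ρ => ?_⟩
  · obtain ⟨hvu, hv, -⟩ := key u v h
    exact ⟨hvu, Option.some_injective _ ((hget (hvu.trans_lt (hlt u))).symm.trans hv)⟩
  · refine infinite_of_injective_forall_mem hlen.injective fun k => ?_
    exact Option.some_injective _ ((hget (hlen (Nat.lt_succ_self k))).symm.trans (hvar k))
  · obtain ⟨-, -, hA⟩ := key v v h
    have htake : (x (v + 1)).take v = (List.range v).map W := by
      rw [hW, ← List.map_take, List.take_range, min_eq_left (hlt v).le]
    exact htake ▸ hA ρ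

lemma exists_isVariableWord_of_eventually [Finite α] {e : Ultrafilter (FreeMonoid α)}
    {z : Ultrafilter (FreeMonoid (Option α))} (hzL : ∀ᶠ x in z, x ∈ leftVariableWords α)
    (hez : ∀ σ, e * z.map (substLetter σ) = e)
    (hz : ∀ σ τ, z.map (substLetter σ) * z.map (substLetter τ) = z.map (substLetter σ))
    {A : Set (List α)} (hA : ∀ᶠ w in e, FreeMonoid.toList w ∈ A) :
    ∃ W : ℕ → α ⊕ ℕ, IsVariableWord W ∧
      ∀ v, W v = .inr v → ∀ ρ, instantiate ρ ((List.range v).map W) ∈ A := by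
  obtain ⟨w, hw⟩ := stablePart_nonempty hez hA
  let State := {x : List (α ⊕ ℕ) // IsGoodWord A x ∧ ∀ ρ, instantiate ρ x ∈ stablePart z A}
  let start : State := ⟨(FreeMonoid.toList w).map .inl, fun u v h => by simp at h, fun ρ => by
    rw [instantiate, List.map_map]
    exact (List.map_id w).symm ▸ hw⟩
  choose d hd hgood hstable using fun x : State => exists_isGoodWord_append hzL hz x.2.1 x.2.2
  let next : State → State := fun x => ⟨x.1 ++ d x, hgood x, hstable x⟩
  let x : ℕ → State := fun k => next^[k] start
  have hx (k) : (x (k + 1)).1 = (x k).1 ++ d (x k) :=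
    congrArg Subtype.val (Function.iterate_succ_apply' next k start)
  have hvar (k) : (x (k + 1)).1[(x k).1.length]? = some (.inr (x k).1.length) := hx k ▸ hd (x k)
  have hlen : StrictMono fun k => (x k).1.length := strictMono_nat_of_lt_succ fun k =>
    (List.getElem?_eq_some_iff.1 (hvar k)).1
  obtain ⟨W, hW⟩ := exists_eq_map_range (fun k => hx k ▸ List.prefix_append _ _) hlen
  exact ⟨W, isVariableWord_of_isGoodWord hW hlen hvar fun k => (x k).2.1⟩

theorem carlson_simpson [Finite α] (A : Set (List α)) :
    ∃ W : ℕ → α ⊕ ℕ, IsVariableWord W ∧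
      ((∀ v, W v = .inr v → ∀ ρ, instantiate ρ ((List.range v).map W) ∈ A) ∨
        ∀ v, W v = .inr v → ∀ ρ, instantiate ρ ((List.range v).map W) ∉ A) := by
  obtain ⟨e, z, hzL, hez, hz⟩ := exists_ultrafilter_substLetter α
  rcases e.mem_or_compl_mem A with hA | hA
  · obtain ⟨W, hW, h⟩ := exists_isVariableWord_of_eventually hzL hez hz hA
    exact ⟨W, hW, Or.inl h⟩
  · obtain ⟨W, hW, h⟩ := exists_isVariableWord_of_eventually (A := Aᶜ) hzL hez hz hA
    exact ⟨W, hW, Or.inr h⟩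

end CarlsonSimpson

section AlternatingRelations

noncomputable instance (E : Setoid ℕ) : DecidablePred (· ∈ minReps E) := Classical.decPred _

/-- The minimal representative of the `E`-class of `y`. -/
noncomputable def minRep (E : Setoid ℕ) (y : ℕ) : ℕ := sInf {z | E.r y z}

/-- The number of minimal representatives of `E` below `x`; on `minReps E` this inverts `pRep E`. -/
noncomputable def repCount (E : Setoid ℕ) (x : ℕ) : ℕ := Nat.count (· ∈ minReps E) x

variable {E F G : Setoid ℕ} {x y z m n k : ℕ}

lemma rel_minRep (E : Setoid ℕ) (y : ℕ) : E.r y (minRep E y) :=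
  Nat.sInf_mem (s := {z | E.r y z}) ⟨y, E.iseqv.refl y⟩

lemma minRep_le_of_rel (h : E.r y z) : minRep E y ≤ z := Nat.sInf_le h

lemma minRep_le (E : Setoid ℕ) (y : ℕ) : minRep E y ≤ y := minRep_le_of_rel (E.iseqv.refl y)

lemma rel_iff_minRep_eq : E.r y z ↔ minRep E y = minRep E z := by
  refine ⟨fun h => le_antisymm ?_ ?_, fun h => ?_⟩
  · exact minRep_le_of_rel (E.iseqv.trans h (rel_minRep E z))
  · exact minRep_le_of_rel (E.iseqv.trans (E.iseqv.symm h) (rel_minRep E y))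
  · exact E.iseqv.trans (rel_minRep E y) (h ▸ E.iseqv.symm (rel_minRep E z))

lemma minRep_minRep (E : Setoid ℕ) (y : ℕ) : minRep E (minRep E y) = minRep E y :=
  (rel_iff_minRep_eq.1 (rel_minRep E y)).symm

lemma mem_minReps_iff : x ∈ minReps E ↔ minRep E x = x := by
  refine ⟨fun h => le_antisymm (minRep_le E x) (h _ (rel_minRep E x)), fun h z hz => ?_⟩
  rw [← h]
  exact minRep_le_of_rel hz

lemma minRep_mem (E : Setoid ℕ) (y : ℕ) : minRep E y ∈ minReps E :=
  mem_minReps_iff.2 (minRep_minRep E y)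

lemma minRep_ker {f : ℕ → ℕ} (hle : ∀ y, f y ≤ y) (hidem : ∀ y, f (f y) = f y) (y : ℕ) :
    minRep (Setoid.ker f) y = f y := by
  refine le_antisymm (minRep_le_of_rel (hidem y).symm) ?_
  have h : f y = f (minRep (Setoid.ker f) y) := rel_minRep (Setoid.ker f) y
  exact h.trans_le (hle _)

lemma minRep_bot (y : ℕ) : minRep ⊥ y = y := (rel_minRep ⊥ y).symm

lemma mem_minReps_bot (x : ℕ) : x ∈ minReps ⊥ := mem_minReps_iff.2 (minRep_bot x)

lemma minReps_bot_infinite : (minReps ⊥).Infinite := infinite_univ.mono fun x _ => mem_minReps_bot x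

lemma coarsens_refl (E : Setoid ℕ) : Coarsens E E := fun _ _ h => h

lemma Coarsens.trans (hEF : Coarsens E F) (hFG : Coarsens F G) : Coarsens E G :=
  fun a b h => hEF a b (hFG a b h)

lemma coarsens_iff : Coarsens F E ↔ ∀ y, minRep F (minRep E y) = minRep F y := by
  refine ⟨fun h y => (rel_iff_minRep_eq.1 (h _ _ (rel_minRep E y))).symm, fun h a b hab => ?_⟩
  rw [rel_iff_minRep_eq] at hab ⊢
  rw [← h a, ← h b, hab]

lemma Coarsens.minReps_subset (h : Coarsens F E) : minReps F ⊆ minReps E :=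
  fun _ hx m hm => hx m (h _ _ hm)

lemma pRep_mem (h : (minReps E).Infinite) (k : ℕ) : pRep E k ∈ minReps E :=
  Nat.nth_mem_of_infinite h k

lemma pRep_strictMono (h : (minReps E).Infinite) : StrictMono (pRep E) := Nat.nth_strictMono h

lemma le_pRep (h : (minReps E).Infinite) (k : ℕ) : k ≤ pRep E k := (pRep_strictMono h).id_le k

lemma repCount_pRep (h : (minReps E).Infinite) (k : ℕ) : repCount E (pRep E k) = k :=
  Nat.count_nth_of_infinite (p := (· ∈ minReps E)) h k

lemma pRep_repCount (h : x ∈ minReps E) : pRep E (repCount E x) = x := Nat.nth_count h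

lemma pRep_bot (k : ℕ) : pRep ⊥ k = k := Nat.nth_of_forall fun x _ => mem_minReps_bot x

lemma count_add_count_of_forall_iff {p q : ℕ → Prop} [DecidablePred p] [DecidablePred q]
    (hmx : m ≤ x) (h : ∀ y, m ≤ y → y < x → (p y ↔ q y)) :
    Nat.count p x + Nat.count q m = Nat.count q x + Nat.count p m := by
  induction x, hmx using Nat.le_induction with
  | base => exact add_comm _ _
  | succ x hmx ih =>
    have ih := ih fun y hmy hyx => h y hmy (hyx.trans x.lt_succ_self)
    simp only [Nat.count_succ, h x hmx x.lt_succ_self]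
    omega

lemma repCount_congr (h : ∀ y < x, minRep F y = minRep G y) : repCount F x = repCount G x :=
  count_add_count_of_forall_iff (Nat.zero_le x) fun y _ hy => by
    rw [mem_minReps_iff, mem_minReps_iff, h y hy]

lemma classes_infinite_iff : (classes E).Infinite ↔ (minReps E).Infinite := by
  have himage : classes E = (fun x => {y | E.r x y}) '' minReps E := by
    refine Subset.antisymm ?_ (image_subset_iff.2 fun x _ => ⟨x, rfl⟩)
    rintro _ ⟨x, rfl⟩
    refine ⟨minRep E x, minRep_mem E x, Set.ext fun y => ?_⟩
    simp only [mem_ofPred_eq, rel_iff_minRep_eq, minRep_minRep]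
  rw [himage, infinite_image_iff]
  intro x hx y hy hxy
  have hrel : E.r x y := (congrArg (y ∈ ·) hxy).mpr (E.iseqv.refl y)
  rwa [rel_iff_minRep_eq, mem_minReps_iff.1 hx, mem_minReps_iff.1 hy] at hrel

/-! ### Approximations -/

lemma mem_approx {q : ℕ × ℕ} : q ∈ approx n E ↔
    q.1 < pRep E n ∧ q.2 < pRep E n ∧ minRep E q.1 = minRep E q.2 := by
  rw [← rel_iff_minRep_eq]
  rfl

lemma diag_mem_approx : (y, y) ∈ approx n E ↔ y < pRep E n := by
  rw [mem_approx]
  exact ⟨And.left, fun h => ⟨h, h, rfl⟩⟩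

lemma approx_eq_approx_iff (hF : (minReps F).Infinite) (hG : (minReps G).Infinite) :
    approx n F = approx k G ↔
      n = k ∧ pRep F n = pRep G k ∧ ∀ y < pRep F n, minRep F y = minRep G y := by
  constructor
  · intro h
    have hp : pRep F n = pRep G k := eq_of_forall_lt_iff fun y => by
      rw [← diag_mem_approx, h, diag_mem_approx]
    have hrel {y z : ℕ} (hy : y < pRep F n) (hz : z < pRep F n) : F.r y z ↔ G.r y z := by
      have hyz := congrArg ((y, z) ∈ ·) h
      simpa only [mem_approx, ← rel_iff_minRep_eq, ← hp, hy, hz, true_and, eq_iff_iff] using hyz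
    have hmin : ∀ y < pRep F n, minRep F y = minRep G y := fun y hy => le_antisymm
      (minRep_le_of_rel ((hrel hy ((minRep_le G y).trans_lt hy)).2 (rel_minRep G y)))
      (minRep_le_of_rel ((hrel hy ((minRep_le F y).trans_lt hy)).1 (rel_minRep F y)))
    refine ⟨?_, hp, hmin⟩
    rw [← repCount_pRep hF n, ← repCount_pRep hG k, ← hp]
    exact repCount_congr hmin
  · rintro ⟨rfl, hp, hmin⟩
    ext q
    rw [mem_approx, mem_approx, hp]
    refine and_congr_right fun h₁ => and_congr_right fun h₂ => ?_
    rw [← hp] at h₁ h₂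
    rw [hmin _ h₁, hmin _ h₂]

lemma pRep_eq_of_forall_lt (hF : (minReps F).Infinite) (hG : pRep F n ∈ minReps G)
    (h : ∀ y < pRep F n, minRep F y = minRep G y) : pRep G n = pRep F n := by
  rw [← pRep_repCount hG, ← repCount_congr h, repCount_pRep hF]

lemma approx_eq_of_forall_lt (hF : (minReps F).Infinite) (hG : (minReps G).Infinite)
    (hp : pRep F n ∈ minReps G) (h : ∀ y < pRep F n, minRep F y = minRep G y) :
    approx n F = approx n G :=
  (approx_eq_approx_iff hF hG).2 ⟨rfl, (pRep_eq_of_forall_lt hF hp h).symm, h⟩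

lemma approx_eq_of_le (hF : (minReps F).Infinite) (hG : (minReps G).Infinite)
    (h : approx n F = approx n G) (hk : k ≤ n) : approx k F = approx k G := by
  obtain ⟨-, hp, hmin⟩ := (approx_eq_approx_iff hF hG).1 h
  rcases hk.eq_or_lt with rfl | hlt
  · exact h
  have hkn := pRep_strictMono hF hlt
  refine approx_eq_of_forall_lt hF hG ?_ fun y hy => hmin y (hy.trans hkn)
  rw [mem_minReps_iff, ← hmin _ hkn]
  exact mem_minReps_iff.1 (pRep_mem hF k)

/-- The finitary quasi-order on approximations: `a` coarsens `b` and has the same domain. -/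
def FinCoarsens (a b : Set (ℕ × ℕ)) : Prop := b ⊆ a ∧ ∀ q ∈ a, (q.1, q.1) ∈ b ∧ (q.2, q.2) ∈ b

lemma finCoarsens_approx_iff : FinCoarsens (approx n F) (approx k G) ↔
    pRep F n = pRep G k ∧ ∀ y < pRep G k, minRep F (minRep G y) = minRep F y := by
  constructor
  · rintro ⟨hsub, hdom⟩
    have hp : pRep F n = pRep G k := eq_of_forall_lt_iff fun y => by
      rw [← diag_mem_approx, ← diag_mem_approx]
      exact ⟨fun h => (hdom _ h).1, fun h => hsub h⟩
    refine ⟨hp, fun y hy => ?_⟩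
    have hmem : (minRep G y, y) ∈ approx k G :=
      mem_approx.2 ⟨(minRep_le G y).trans_lt hy, hy, minRep_minRep G y⟩
    exact (mem_approx.1 (hsub hmem)).2.2
  · rintro ⟨hp, hmin⟩
    refine ⟨fun q hq => ?_, fun q hq => ?_⟩
    · obtain ⟨h₁, h₂, hq⟩ := mem_approx.1 hq
      rw [mem_approx, hp, ← hmin _ h₁, ← hmin _ h₂, hq]
      exact ⟨h₁, h₂, rfl⟩
    · obtain ⟨h₁, h₂, -⟩ := mem_approx.1 hq
      rw [diag_mem_approx, diag_mem_approx, ← hp]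
      exact ⟨h₁, h₂⟩

lemma finite_finCoarsens_approx (n : ℕ) (E : Setoid ℕ) :
    {a | FinCoarsens a (approx n E)}.Finite := by
  refine ((finite_Iio (pRep E n)).prod (finite_Iio (pRep E n))).finite_subsets.subset ?_
  exact fun a ha q hq => ⟨diag_mem_approx.1 (ha.2 q hq).1, diag_mem_approx.1 (ha.2 q hq).2⟩

/-! ### Alternating equivalence relations -/

/-- Equivalence relations that are `P`-alternating in the primed sense, with the partition `P` of
`ℕ` into `l` pieces encoded by the function `ty` sending `y` to the index of its piece. -/
structure IsAlternating (l : ℕ) (ty : ℕ → ℕ) (E : Setoid ℕ) : Prop where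
  infinite : (minReps E).Infinite
  type_pRep : ∀ k, ty (pRep E k) = k % l
  type_minRep_le : ∀ y, ty (minRep E y) ≤ ty y

variable {l : ℕ} {ty : ℕ → ℕ}

lemma IsAlternating.type_eq (hE : IsAlternating l ty E) (hx : x ∈ minReps E) :
    ty x = repCount E x % l := by
  rw [← hE.type_pRep, pRep_repCount hx]

lemma isAlternating_of_type_eq (hinf : (minReps E).Infinite)
    (htype : ∀ x ∈ minReps E, ty x = repCount E x % l) (hle : ∀ y, ty (minRep E y) ≤ ty y) :
    IsAlternating l ty E :=
  ⟨hinf, fun k => by rw [htype _ (pRep_mem hinf k), repCount_pRep hinf], hle⟩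

lemma mem_EPalt'_iff {hl : 0 < l} {P : Fin l → Set ℕ} {t : ℕ → Fin l}
    (ht : ∀ y i, y ∈ P i ↔ t y = i) :
    E ∈ EPalt' l hl P ↔ IsAlternating l (fun y => t y) E := by
  have htype (k : ℕ) : pRep E k ∈ P ⟨k % l, Nat.mod_lt k hl⟩ ↔ (t (pRep E k) : ℕ) = k % l := by
    rw [ht, Fin.ext_iff]
  constructor
  · rintro ⟨⟨hinf, halt⟩, hclass⟩
    refine ⟨classes_infinite_iff.1 hinf, fun k => (htype k).1 (halt k), fun y => ?_⟩
    obtain ⟨j, hj, hyj⟩ := hclass _ (minRep_mem E y) _ ((ht _ _).2 rfl) y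
      (E.iseqv.symm (rel_minRep E y))
    rw [(ht _ _).1 hyj]
    exact hj
  · rintro ⟨hinf, halt, hle⟩
    refine ⟨⟨classes_infinite_iff.2 hinf, fun k => (htype k).2 (halt k)⟩, ?_⟩
    intro x hx i hi y hxy
    refine ⟨t y, ?_, (ht _ _).2 rfl⟩
    rw [← (ht _ _).1 hi, ← mem_minReps_iff.1 hx, rel_iff_minRep_eq.1 hxy]
    exact hle y

/-! ### Splicing -/

/-- The map whose kernel is `splice B G H m`. -/
noncomputable def spliceMap (B G H : Setoid ℕ) (m y : ℕ) : ℕ :=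
  if minRep B y < m then minRep G (minRep B y) else minRep H y

/-- The coarsening of `B` that merges the classes of `B` meeting `[0, m)` as `G` does and the other
classes of `B` as `H` does. -/
noncomputable def splice (B G H : Setoid ℕ) (m : ℕ) : Setoid ℕ := Setoid.ker (spliceMap B G H m)

/-- Compatibility conditions under which `splice B G H m` agrees with `G` below `m` and has the
minimal representatives of `H` from `m` on. -/
structure Spliceable (B G H : Setoid ℕ) (m : ℕ) : Prop where
  coarsens : Coarsens H B
  minRep_minRep_left : ∀ y < m, minRep G (minRep B y) = minRep G y
  mem_left : m ∈ minReps G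
  mem_right : m ∈ minReps H
  minRep_mem_left : ∀ y, m ≤ minRep B y → minRep H y < m → minRep H y ∈ minReps G

variable {A B H : Setoid ℕ} {d : ℕ}

lemma spliceMap_of_lt (h : minRep B y < m) : spliceMap B G H m y = minRep G (minRep B y) := if_pos h

lemma spliceMap_of_le (h : m ≤ minRep B y) : spliceMap B G H m y = minRep H y := if_neg h.not_gt

lemma spliceMap_le (B G H : Setoid ℕ) (m y : ℕ) : spliceMap B G H m y ≤ y := by
  rcases lt_or_ge (minRep B y) m with hy | hy
  · rw [spliceMap_of_lt hy]
    exact (minRep_le G _).trans (minRep_le B y)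
  · rw [spliceMap_of_le hy]
    exact minRep_le H y

namespace Spliceable

lemma spliceMap_eq_left (h : Spliceable B G H m) (hy : y < m) :
    spliceMap B G H m y = minRep G y := by
  rw [spliceMap_of_lt ((minRep_le B y).trans_lt hy), h.minRep_minRep_left y hy]

lemma spliceMap_spliceMap (h : Spliceable B G H m) (y : ℕ) :
    spliceMap B G H m (spliceMap B G H m y) = spliceMap B G H m y := by
  rcases lt_or_ge (minRep B y) m with hy | hy
  · rw [spliceMap_of_lt hy, h.spliceMap_eq_left ((minRep_le G _).trans_lt hy), minRep_minRep]
  · rw [spliceMap_of_le hy]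
    rcases lt_or_ge (minRep H y) m with hHy | hHy
    · rw [h.spliceMap_eq_left hHy]
      exact mem_minReps_iff.1 (h.minRep_mem_left y hy hHy)
    · have hB := mem_minReps_iff.1 (h.coarsens.minReps_subset (minRep_mem H y))
      rw [spliceMap_of_le (by rwa [hB]), minRep_minRep]

lemma minRep_splice (h : Spliceable B G H m) (y : ℕ) :
    minRep (splice B G H m) y = spliceMap B G H m y :=
  minRep_ker (spliceMap_le B G H m) h.spliceMap_spliceMap y

lemma minRep_splice_of_lt (h : Spliceable B G H m) (hy : y < m) :
    minRep (splice B G H m) y = minRep G y := by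
  rw [h.minRep_splice, h.spliceMap_eq_left hy]

lemma mem_minReps_splice_iff (h : Spliceable B G H m) (hx : m ≤ x) :
    x ∈ minReps (splice B G H m) ↔ x ∈ minReps H := by
  rw [mem_minReps_iff, mem_minReps_iff, h.minRep_splice]
  rcases lt_or_ge (minRep B x) m with hBx | hBx
  · rw [spliceMap_of_lt hBx, ← coarsens_iff.1 h.coarsens x]
    have hG := minRep_le G (minRep B x)
    have hH := minRep_le H (minRep B x)
    omega
  · rw [spliceMap_of_le hBx]

lemma coarsens_splice (h : Spliceable B G H m) : Coarsens (splice B G H m) B := by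
  refine coarsens_iff.2 fun y => ?_
  rw [h.minRep_splice, h.minRep_splice, spliceMap, spliceMap, minRep_minRep,
    coarsens_iff.1 h.coarsens]

lemma approx_splice (h : Spliceable B G H m) (hS : IsAlternating l ty (splice B G H m))
    (hG : IsAlternating l ty G) (hm : pRep G n = m) : approx n (splice B G H m) = approx n G := by
  subst hm
  refine (approx_eq_of_forall_lt hG.infinite hS.infinite ?_ fun y hy => ?_).symm
  · exact (h.mem_minReps_splice_iff le_rfl).2 h.mem_right
  · exact (h.minRep_splice_of_lt hy).symm

lemma isAlternating_splice (h : Spliceable B G H m) (hB : IsAlternating l ty B)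
    (hG : IsAlternating l ty G) (hH : IsAlternating l ty H) :
    IsAlternating l ty (splice B G H m) := by
  have hcount : repCount (splice B G H m) m = repCount G m :=
    repCount_congr fun y hy => h.minRep_splice_of_lt hy
  refine isAlternating_of_type_eq ?_ (fun x hx => ?_) fun y => ?_
  · refine (hH.infinite.sdiff (finite_Iio m)).mono fun x hx => ?_
    exact (h.mem_minReps_splice_iff (not_lt.1 hx.2)).2 hx.1
  · rcases lt_or_ge x m with hxm | hmx
    · have hxG : x ∈ minReps G := by
        rwa [mem_minReps_iff, ← h.minRep_splice_of_lt hxm, ← mem_minReps_iff]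
      rw [hG.type_eq hxG]
      exact congrArg (· % l) (repCount_congr fun y hy => h.minRep_splice_of_lt (hy.trans hxm)).symm
    · have hadd : repCount (splice B G H m) x + repCount H m = repCount H x + repCount G m := by
        rw [← hcount]
        exact count_add_count_of_forall_iff hmx fun y hy _ => h.mem_minReps_splice_iff hy
      have hGH : repCount H m ≡ repCount G m [MOD l] :=
        (hH.type_eq h.mem_right).symm.trans (hG.type_eq h.mem_left)
      rw [hH.type_eq ((h.mem_minReps_splice_iff hmx).1 hx)]
      exact (Nat.ModEq.add_right_cancel hGH (congrArg (· % l) hadd)).symm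
  · rw [h.minRep_splice]
    rcases lt_or_ge (minRep B y) m with hy | hy
    · rw [spliceMap_of_lt hy]
      exact (hG.type_minRep_le _).trans (hB.type_minRep_le y)
    · rw [spliceMap_of_le hy]
      exact hH.type_minRep_le y

end Spliceable

lemma exists_coarsens_approx_eq (hF : IsAlternating l ty F) (hB : IsAlternating l ty B)
    (hFB : FinCoarsens (approx n F) (approx d B)) :
    ∃ G, IsAlternating l ty G ∧ Coarsens G B ∧ approx n G = approx n F := by
  obtain ⟨hp, hmin⟩ := finCoarsens_approx_iff.1 hFB
  have h : Spliceable B F B (pRep F n) :=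
    { coarsens := coarsens_refl B
      minRep_minRep_left := hp ▸ hmin
      mem_left := pRep_mem hF.infinite n
      mem_right := hp ▸ pRep_mem hB.infinite d
      minRep_mem_left := fun y hy hlt => absurd hlt hy.not_gt }
  have halt := h.isAlternating_splice hB hF hB
  exact ⟨_, halt, h.coarsens_splice, h.approx_splice halt hF rfl⟩

lemma exists_alternating_amalgam (hA : IsAlternating l ty A) (hB : IsAlternating l ty B)
    (hAB : Coarsens A B) (hfin : FinCoarsens (approx n A) (approx d B)) :
    ∃ A', IsAlternating l ty A' ∧ Coarsens A' B ∧ approx d A' = approx d B ∧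
      ∀ F, IsAlternating l ty F → Coarsens F A' → approx n F = approx n A → Coarsens F A := by
  obtain ⟨hp, -⟩ := finCoarsens_approx_iff.1 hfin
  have h : Spliceable B B A (pRep A n) :=
    { coarsens := hAB
      minRep_minRep_left := fun y _ => minRep_minRep B y
      mem_left := hp ▸ pRep_mem hB.infinite d
      mem_right := pRep_mem hA.infinite n
      minRep_mem_left := fun y _ _ => hAB.minReps_subset (minRep_mem A y) }
  have halt := h.isAlternating_splice hB hB hA
  refine ⟨_, halt, h.coarsens_splice, h.approx_splice halt hB hp.symm, fun F hF hFA' hFA => ?_⟩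
  obtain ⟨-, hpFA, hmin⟩ := (approx_eq_approx_iff hF.infinite hA.infinite).1 hFA
  have hFB := coarsens_iff.1 (hFA'.trans h.coarsens_splice)
  refine coarsens_iff.2 fun y => ?_
  rcases lt_or_ge (minRep B y) (pRep A n) with hy | hy
  · rw [← hpFA] at hy
    rw [← coarsens_iff.1 hAB y, ← hmin _ hy, minRep_minRep, hFB]
  · rw [← spliceMap_of_le (G := B) hy, ← h.minRep_splice, coarsens_iff.1 hFA']

lemma finCoarsens_approx_of_coarsens (hF : (minReps F).Infinite) (hFB : Coarsens F B) (n : ℕ) :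
    FinCoarsens (approx n F) (approx (repCount B (pRep F n)) B) := by
  refine finCoarsens_approx_iff.2 ⟨(pRep_repCount ?_).symm, fun y _ => coarsens_iff.1 hFB y⟩
  exact hFB.minReps_subset (pRep_mem hF n)

lemma exists_finCoarsens_of_le (hF : (minReps F).Infinite) (hB : (minReps B).Infinite)
    (hFB : Coarsens F B) (h : FinCoarsens (approx n F) (approx d B)) (hnk : n ≤ k) :
    ∃ e, d ≤ e ∧ FinCoarsens (approx k F) (approx e B) := by
  refine ⟨_, ?_, finCoarsens_approx_of_coarsens hF hFB k⟩
  rw [← repCount_pRep hB d, ← (finCoarsens_approx_iff.1 h).1]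
  exact Nat.count_monotone _ ((pRep_strictMono hF).monotone hnk)

/-! ### Fusion -/

/-- Sequences of alternating relations to which the fusion axiom applies. -/
structure IsFusionSequence (l : ℕ) (ty : ℕ → ℕ) (d : ℕ) (A : ℕ → Setoid ℕ) : Prop where
  isAlternating : ∀ i, IsAlternating l ty (A i)
  coarsens_succ : ∀ i, Coarsens (A (i + 1)) (A i)
  approx_succ : ∀ i, approx (d + i) (A (i + 1)) = approx (d + i) (A i)

/-- The limit of a fusion sequence. The classes of `y` in `A i` are decided from `i = y + 1` on. -/
noncomputable def fusion (A : ℕ → Setoid ℕ) : Setoid ℕ := Setoid.ker fun y => minRep (A (y + 1)) y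

namespace IsFusionSequence

variable {A : ℕ → Setoid ℕ} {i j : ℕ}

lemma coarsens_of_le (hA : IsFusionSequence l ty d A) (hij : i ≤ j) : Coarsens (A j) (A i) := by
  induction j, hij using Nat.le_induction with
  | base => exact coarsens_refl _
  | succ j _ ih => exact (hA.coarsens_succ j).trans ih

lemma approx_eq (hA : IsFusionSequence l ty d A) (hij : i ≤ j) :
    approx (d + i) (A i) = approx (d + i) (A j) := by
  induction j, hij using Nat.le_induction with
  | base => rfl
  | succ j hij ih =>
    refine ih.trans (approx_eq_of_le (hA.isAlternating j).infinite
      (hA.isAlternating (j + 1)).infinite (hA.approx_succ j).symm ?_)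
    omega

lemma pRep_eq (hA : IsFusionSequence l ty d A) (hij : i ≤ j) :
    pRep (A i) (d + i) = pRep (A j) (d + i) :=
  ((approx_eq_approx_iff (hA.isAlternating i).infinite (hA.isAlternating j).infinite).1
    (hA.approx_eq hij)).2.1

lemma minRep_eq (hA : IsFusionSequence l ty d A) (hij : i ≤ j) (hy : y < pRep (A i) (d + i)) :
    minRep (A i) y = minRep (A j) y :=
  ((approx_eq_approx_iff (hA.isAlternating i).infinite (hA.isAlternating j).infinite).1
    (hA.approx_eq hij)).2.2 y hy

lemma lt_pRep (hA : IsFusionSequence l ty d A) (hy : y < i) : y < pRep (A i) (d + i) :=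
  hy.trans_le ((Nat.le_add_left i d).trans (le_pRep (hA.isAlternating i).infinite _))

lemma minRep_succ_eq (hA : IsFusionSequence l ty d A) (hy : y < pRep (A i) (d + i)) :
    minRep (A (y + 1)) y = minRep (A i) y := by
  rcases le_total i (y + 1) with h | h
  · exact (hA.minRep_eq h hy).symm
  · exact hA.minRep_eq h (hA.lt_pRep y.lt_succ_self)

lemma minRep_fusion (hA : IsFusionSequence l ty d A) (hy : y < pRep (A i) (d + i)) :
    minRep (fusion A) y = minRep (A i) y := by
  rw [← hA.minRep_succ_eq hy]
  refine minRep_ker (fun y => minRep_le _ y) (fun y => ?_) y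
  rw [hA.minRep_succ_eq ((minRep_le _ y).trans_lt (hA.lt_pRep y.lt_succ_self)), minRep_minRep]

lemma coarsens_fusion (hA : IsFusionSequence l ty d A) (i : ℕ) : Coarsens (fusion A) (A i) := by
  refine coarsens_iff.2 fun y => ?_
  have hy : y < pRep (A (max i (y + 1))) (d + max i (y + 1)) :=
    hA.lt_pRep (y.lt_succ_self.trans_le (le_max_right _ _))
  rw [hA.minRep_fusion hy, hA.minRep_fusion ((minRep_le (A i) y).trans_lt hy)]
  exact coarsens_iff.1 (hA.coarsens_of_le (le_max_left _ _)) y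

lemma mem_minReps_fusion_iff (hA : IsFusionSequence l ty d A) (hx : x < i) :
    x ∈ minReps (fusion A) ↔ x ∈ minReps (A i) := by
  rw [mem_minReps_iff, mem_minReps_iff, hA.minRep_fusion (hA.lt_pRep hx)]

lemma pRep_mem_fusion (hA : IsFusionSequence l ty d A) (i : ℕ) :
    pRep (A i) (d + i) ∈ minReps (fusion A) := by
  obtain ⟨j, hij, hj⟩ : ∃ j, i ≤ j ∧ pRep (A i) (d + i) < j :=
    ⟨_, le_max_left i _, (Nat.lt_succ_self _).trans_le (le_max_right _ _)⟩
  rw [hA.mem_minReps_fusion_iff hj, hA.pRep_eq hij]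
  exact pRep_mem (hA.isAlternating j).infinite _

lemma isAlternating_fusion (hA : IsFusionSequence l ty d A) : IsAlternating l ty (fusion A) := by
  refine isAlternating_of_type_eq ?_ (fun x hx => ?_) fun y => ?_
  · exact infinite_of_forall_exists_gt fun x =>
      ⟨_, hA.pRep_mem_fusion (x + 1), hA.lt_pRep x.lt_succ_self⟩
  · have hcount : repCount (fusion A) x = repCount (A (x + 1)) x := repCount_congr fun y hy =>
      hA.minRep_fusion (hA.lt_pRep (hy.trans x.lt_succ_self))
    rw [hcount]
    exact (hA.isAlternating _).type_eq ((hA.mem_minReps_fusion_iff x.lt_succ_self).1 hx)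
  · rw [hA.minRep_fusion (hA.lt_pRep y.lt_succ_self)]
    exact (hA.isAlternating _).type_minRep_le y

lemma approx_fusion (hA : IsFusionSequence l ty d A) (i : ℕ) :
    approx (d + i) (fusion A) = approx (d + i) (A i) :=
  (approx_eq_of_forall_lt (hA.isAlternating i).infinite hA.isAlternating_fusion.infinite
    (hA.pRep_mem_fusion i) fun _ hy => (hA.minRep_fusion hy).symm).symm

end IsFusionSequence

/-! ### Merging numbered classes -/

/-- The index of the class of `y` when the classes of `B` are listed by increasing minimum. -/
noncomputable def classIndex (B : Setoid ℕ) (y : ℕ) : ℕ := repCount B (minRep B y)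

/-- The coarsening of `B` that merges its `i`-th and `j`-th classes whenever `E` relates `i` and
`j`. Every coarsening of `B` arises in this way, so `mergeClasses B` identifies the space with the
set of coarsenings of `B`. -/
noncomputable def mergeClasses (B E : Setoid ℕ) : Setoid ℕ := E.comap (classIndex B)

lemma pRep_classIndex (B : Setoid ℕ) (y : ℕ) : pRep B (classIndex B y) = minRep B y :=
  pRep_repCount (minRep_mem B y)

lemma classIndex_pRep (hB : (minReps B).Infinite) (k : ℕ) : classIndex B (pRep B k) = k := by
  rw [classIndex, mem_minReps_iff.1 (pRep_mem hB k), repCount_pRep hB]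

lemma coarsens_mergeClasses (B E : Setoid ℕ) : Coarsens (mergeClasses B E) B := fun a b h => by
  change E.r (repCount B (minRep B a)) (repCount B (minRep B b))
  rw [rel_iff_minRep_eq.1 h]

lemma mergeClasses_bot (B : Setoid ℕ) : mergeClasses B ⊥ = B := Setoid.ext fun a b => by
  refine ⟨fun h => ?_, coarsens_mergeClasses B ⊥ a b⟩
  have hindex : classIndex B a = classIndex B b := h
  rw [rel_iff_minRep_eq, ← pRep_classIndex, ← pRep_classIndex, hindex]

lemma mergeClasses_comap (h : Coarsens F B) : mergeClasses B (F.comap (pRep B)) = F :=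
  Setoid.ext fun a b => by
    change F.r (pRep B (classIndex B a)) (pRep B (classIndex B b)) ↔ F.r a b
    rw [pRep_classIndex, pRep_classIndex, rel_iff_minRep_eq, rel_iff_minRep_eq,
      coarsens_iff.1 h, coarsens_iff.1 h]

lemma coarsens_of_mergeClasses (hB : (minReps B).Infinite)
    (h : Coarsens (mergeClasses B F) (mergeClasses B E)) : Coarsens F E := fun a b hab => by
  have hrel : F.r (classIndex B (pRep B a)) (classIndex B (pRep B b)) := by
    refine h _ _ ?_
    change E.r (classIndex B (pRep B a)) (classIndex B (pRep B b))
    rwa [classIndex_pRep hB, classIndex_pRep hB]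
  rwa [classIndex_pRep hB, classIndex_pRep hB] at hrel

lemma minRep_mergeClasses (hB : (minReps B).Infinite) (E : Setoid ℕ) (y : ℕ) :
    minRep (mergeClasses B E) y = pRep B (minRep E (classIndex B y)) := by
  refine le_antisymm (minRep_le_of_rel ?_) ?_
  · change E.r (classIndex B y) (classIndex B (pRep B _))
    rw [classIndex_pRep hB]
    exact rel_minRep E _
  · refine ((pRep_strictMono hB).monotone ?_).trans
      ((pRep_classIndex B (minRep (mergeClasses B E) y)).trans_le (minRep_le B _))
    exact minRep_le_of_rel (rel_minRep (mergeClasses B E) y)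

lemma pRep_mem_minReps_mergeClasses_iff (hB : (minReps B).Infinite) :
    pRep B k ∈ minReps (mergeClasses B E) ↔ k ∈ minReps E := by
  rw [mem_minReps_iff, minRep_mergeClasses hB, classIndex_pRep hB,
    (pRep_strictMono hB).injective.eq_iff, ← mem_minReps_iff]

lemma exists_pRep_eq_of_mem_mergeClasses (hx : x ∈ minReps (mergeClasses B E)) :
    ∃ k, pRep B k = x :=
  ⟨_, pRep_repCount ((coarsens_mergeClasses B E).minReps_subset hx)⟩

lemma minReps_mergeClasses (hB : (minReps B).Infinite) (E : Setoid ℕ) :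
    minReps (mergeClasses B E) = pRep B '' minReps E := by
  refine Subset.antisymm (fun x hx => ?_)
    (image_subset_iff.2 fun k => (pRep_mem_minReps_mergeClasses_iff hB).2)
  obtain ⟨k, rfl⟩ := exists_pRep_eq_of_mem_mergeClasses hx
  exact ⟨k, (pRep_mem_minReps_mergeClasses_iff hB).1 hx, rfl⟩

lemma minReps_mergeClasses_infinite_iff (hB : (minReps B).Infinite) :
    (minReps (mergeClasses B E)).Infinite ↔ (minReps E).Infinite := by
  rw [minReps_mergeClasses hB, infinite_image_iff (pRep_strictMono hB).injective.injOn]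

lemma pRep_mergeClasses (hB : (minReps B).Infinite) (hE : (minReps E).Infinite) (k : ℕ) :
    pRep (mergeClasses B E) k = pRep B (pRep E k) := by
  have hnth := Nat.nth_comp_of_strictMono (n := k) (pRep_strictMono hB)
    (fun x => exists_pRep_eq_of_mem_mergeClasses (E := E))
    fun hfin => absurd hfin ((minReps_mergeClasses_infinite_iff hB).2 hE)
  simp only [pRep_mem_minReps_mergeClasses_iff hB] at hnth
  exact hnth.symm

lemma isAlternating_mergeClasses_iff (hB : IsAlternating l ty B) :
    IsAlternating l ty (mergeClasses B E) ↔ IsAlternating l (· % l) E := by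
  have hpRep (hE : (minReps E).Infinite) (k : ℕ) :
      ty (pRep (mergeClasses B E) k) = pRep E k % l := by
    rw [pRep_mergeClasses hB.infinite hE, hB.type_pRep]
  have hminRep (y : ℕ) : ty (minRep (mergeClasses B E) y) = minRep E (classIndex B y) % l := by
    rw [minRep_mergeClasses hB.infinite, hB.type_pRep]
  constructor
  · rintro ⟨hinf, htype, hle⟩
    have hE := (minReps_mergeClasses_infinite_iff hB.infinite).1 hinf
    refine ⟨hE, fun k => (hpRep hE k).symm.trans (htype k), fun j => ?_⟩
    have hj := hle (pRep B j)
    rwa [hminRep, classIndex_pRep hB.infinite, hB.type_pRep] at hj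
  · rintro ⟨hE, htype, hle⟩
    refine ⟨(minReps_mergeClasses_infinite_iff hB.infinite).2 hE,
      fun k => (hpRep hE k).trans (htype k), fun y => ?_⟩
    calc ty (minRep (mergeClasses B E) y) = minRep E (classIndex B y) % l := hminRep y
      _ ≤ classIndex B y % l := hle _
      _ = ty (minRep B y) := by rw [← hB.type_pRep, pRep_classIndex]
      _ ≤ ty y := hB.type_minRep_le y

lemma approx_mergeClasses_eq_iff (hB : (minReps B).Infinite) (hF : (minReps F).Infinite)
    (hG : (minReps G).Infinite) :
    approx n (mergeClasses B F) = approx n (mergeClasses B G) ↔ approx n F = approx n G := by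
  have hinj := (pRep_strictMono hB).injective
  rw [approx_eq_approx_iff hF hG, approx_eq_approx_iff
    ((minReps_mergeClasses_infinite_iff hB).2 hF) ((minReps_mergeClasses_infinite_iff hB).2 hG),
    pRep_mergeClasses hB hF, pRep_mergeClasses hB hG, hinj.eq_iff]
  simp only [minRep_mergeClasses hB, hinj.eq_iff]
  refine and_congr_right fun _ => and_congr_right fun _ => ⟨fun h j hj => ?_, fun h y hy => h _ ?_⟩
  · have hj := h _ (pRep_strictMono hB hj)
    rwa [classIndex_pRep hB] at hj
  · rw [← (pRep_strictMono hB).lt_iff_lt, pRep_classIndex]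
    exact (minRep_le B y).trans_lt hy

lemma approx_mergeClasses_eq_self_iff (hB : (minReps B).Infinite) (hE : (minReps E).Infinite) :
    approx n (mergeClasses B E) = approx n B ↔ approx n E = approx n ⊥ := by
  have h := approx_mergeClasses_eq_iff (n := n) hB hE minReps_bot_infinite
  rwa [mergeClasses_bot] at h

/-! ### The pigeonhole axiom -/

/-- A letter prescribes how the `l` points of a block are absorbed by the classes of `0, …, n`,
respecting the types modulo `l`. -/
abbrev Letter (n l : ℕ) : Type :=
  {σ : Fin l → Fin (n + 1) // ∀ s, (σ s : ℕ) % l ≤ (n + 1 + s) % l}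

lemma block_mod (n u s : ℕ) : (n + 1 + l * u + s) % l = (n + 1 + s) % l := by
  rw [add_right_comm, Nat.add_mul_mod_self_left]

lemma exists_letters (hF : IsAlternating l (· % l) F) (n : ℕ) :
    ∃ ρ : ℕ → Letter n l, ∀ (v : ℕ) (s : Fin l), minRep F (n + 1 + l * v + s) ≤ n →
      ((ρ v).1 s : ℕ) = minRep F (n + 1 + l * v + s) := by
  suffices h : ∀ v, ∃ σ : Letter n l, ∀ s : Fin l, minRep F (n + 1 + l * v + s) ≤ n →
      (σ.1 s : ℕ) = minRep F (n + 1 + l * v + s) from Classical.skolem.1 h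
  intro v
  let σ (s : Fin l) : Fin (n + 1) := if h : minRep F (n + 1 + l * v + s) ≤ n
    then ⟨_, Nat.lt_succ_of_le h⟩ else 0
  have hσ (s : Fin l) (h : minRep F (n + 1 + l * v + s) ≤ n) :
      (σ s : ℕ) = minRep F (n + 1 + l * v + s) := congrArg Fin.val (dif_pos h)
  refine ⟨⟨σ, fun s => ?_⟩, hσ⟩
  by_cases h : minRep F (n + 1 + l * v + s) ≤ n
  · rw [hσ s h, ← block_mod n v]
    exact hF.type_minRep_le _
  · simp only [σ, dif_neg h, Fin.val_zero, Nat.zero_mod, Nat.zero_le]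

variable [NeZero l]

/-- The retraction of `ℕ` coded by an infinite word `W`. It fixes `0, …, n`; the points above `n`
are cut into blocks of length `l`, the `u`-th of which is mapped into `{0, …, n}` as prescribed by
the letter `W u`, or translated onto the `v`-th block when `W u` is the variable `v`. -/
def blockMap (W : ℕ → Letter n l ⊕ ℕ) (j : ℕ) : ℕ :=
  if j ≤ n then j else
    match W ((j - (n + 1)) / l) with
    | .inl σ => σ.1 (Fin.ofNat l (j - (n + 1)))
    | .inr v => n + 1 + l * v + (j - (n + 1)) % l

/-- The equivalence relation coded by an infinite word. -/
def blockRel (W : ℕ → Letter n l ⊕ ℕ) : Setoid ℕ := Setoid.ker (blockMap W)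

variable {W : ℕ → Letter n l ⊕ ℕ} {u v : ℕ} {σ : Letter n l}

lemma blockMap_of_le (hy : y ≤ n) : blockMap W y = y := if_pos hy

lemma block_div_mod (n u : ℕ) (s : Fin l) :
    (n + 1 + l * u + s - (n + 1)) / l = u ∧ (n + 1 + l * u + s - (n + 1)) % l = s := by
  rw [add_assoc (n + 1), Nat.add_sub_cancel_left, Nat.mul_add_div (NeZero.pos l), Nat.mul_add_mod,
    Nat.div_eq_of_lt s.isLt, Nat.mod_eq_of_lt s.isLt]
  exact ⟨rfl, rfl⟩

lemma exists_eq_block (l : ℕ) [NeZero l] (hy : n < y) :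
    ∃ u, ∃ s : Fin l, y = n + 1 + l * u + s := by
  refine ⟨(y - (n + 1)) / l, ⟨(y - (n + 1)) % l, Nat.mod_lt _ (NeZero.pos l)⟩, ?_⟩
  rw [add_assoc, Nat.div_add_mod, Nat.add_sub_cancel' hy]

lemma blockMap_inl (h : W u = .inl σ) (s : Fin l) : blockMap W (n + 1 + l * u + s) = σ.1 s := by
  obtain ⟨hdiv, hmod⟩ := block_div_mod n u s
  have hs : Fin.ofNat l (n + 1 + l * u + s - (n + 1)) = s := Fin.ext hmod
  rw [blockMap, if_neg (by omega), hdiv, h, hs]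

lemma blockMap_inr (h : W u = .inr v) (s : Fin l) :
    blockMap W (n + 1 + l * u + s) = n + 1 + l * v + s := by
  obtain ⟨hdiv, hmod⟩ := block_div_mod n u s
  rw [blockMap, if_neg (by omega), hdiv, h, hmod]

lemma blockMap_eq_self_iff (s : Fin l) :
    blockMap W (n + 1 + l * u + s) = n + 1 + l * u + s ↔ W u = .inr u := by
  rcases hW : W u with σ | v
  · rw [blockMap_inl hW]
    have hσ := (σ.1 s).isLt
    simp only [reduceCtorEq, iff_false]
    omega
  · rw [blockMap_inr hW, Nat.add_right_cancel_iff, Nat.add_left_cancel_iff,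
      Nat.mul_right_inj (NeZero.ne l), Sum.inr.injEq]

lemma blockMap_mod_le (W : ℕ → Letter n l ⊕ ℕ) (y : ℕ) : blockMap W y % l ≤ y % l := by
  rcases le_or_gt y n with hy | hy
  · rw [blockMap_of_le hy]
  obtain ⟨u, s, rfl⟩ := exists_eq_block l hy
  rcases hW : W u with σ | v
  · rw [blockMap_inl hW, block_mod]
    exact σ.2 s
  · rw [blockMap_inr hW, block_mod, block_mod]

namespace IsVariableWord

lemma blockMap_le (hW : IsVariableWord W) (y : ℕ) : blockMap W y ≤ y := by
  rcases le_or_gt y n with hy | hy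
  · rw [blockMap_of_le hy]
  obtain ⟨u, s, rfl⟩ := exists_eq_block l hy
  rcases hu : W u with σ | v
  · rw [blockMap_inl hu]
    have hσ := (σ.1 s).isLt
    omega
  · rw [blockMap_inr hu]
    have hvu := Nat.mul_le_mul_left l (hW.1 u v hu).1
    omega

lemma blockMap_blockMap (hW : IsVariableWord W) (y : ℕ) :
    blockMap W (blockMap W y) = blockMap W y := by
  rcases le_or_gt y n with hy | hy
  · rw [blockMap_of_le hy, blockMap_of_le hy]
  obtain ⟨u, s, rfl⟩ := exists_eq_block l hy
  rcases hu : W u with σ | v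
  · rw [blockMap_inl hu, blockMap_of_le (Nat.le_of_lt_succ (σ.1 s).isLt)]
  · rw [blockMap_inr hu]
    exact (blockMap_eq_self_iff s).2 (hW.1 u v hu).2

lemma minRep_blockRel (hW : IsVariableWord W) (y : ℕ) : minRep (blockRel W) y = blockMap W y :=
  minRep_ker hW.blockMap_le hW.blockMap_blockMap y

lemma mem_minReps_of_le (hW : IsVariableWord W) (hx : x ≤ n) : x ∈ minReps (blockRel W) := by
  rw [mem_minReps_iff, hW.minRep_blockRel, blockMap_of_le hx]

lemma mem_minReps_block_iff (hW : IsVariableWord W) (s : Fin l) :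
    n + 1 + l * u + s ∈ minReps (blockRel W) ↔ W u = .inr u := by
  rw [mem_minReps_iff, hW.minRep_blockRel, blockMap_eq_self_iff]

lemma repCount_of_le (hW : IsVariableWord W) (hx : x ≤ n + 1) : repCount (blockRel W) x = x :=
  Nat.count_iff_forall.2 fun _ hy => hW.mem_minReps_of_le (Nat.le_of_lt_succ (hy.trans_le hx))

lemma repCount_block_of_eq (hW : IsVariableWord W) (hu : W u = .inr u) {s : ℕ} (hs : s ≤ l) :
    repCount (blockRel W) (n + 1 + l * u + s) = repCount (blockRel W) (n + 1 + l * u) + s := by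
  rw [repCount, Nat.count_add, ← repCount, Nat.add_left_cancel_iff, Nat.count_iff_forall]
  exact fun s' hs' => (hW.mem_minReps_block_iff ⟨s', hs'.trans_le hs⟩).2 hu

lemma repCount_block_of_ne (hW : IsVariableWord W) (hu : W u ≠ .inr u) :
    repCount (blockRel W) (n + 1 + l * u + l) = repCount (blockRel W) (n + 1 + l * u) := by
  rw [repCount, Nat.count_add, ← repCount, Nat.add_eq_left, Nat.count_iff_forall_not]
  exact fun s hs h => hu ((hW.mem_minReps_block_iff ⟨s, hs⟩).1 h)

lemma repCount_block_modEq (hW : IsVariableWord W) (u : ℕ) :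
    repCount (blockRel W) (n + 1 + l * u) ≡ n + 1 [MOD l] := by
  induction u with
  | zero => rw [mul_zero, add_zero, hW.repCount_of_le le_rfl]
  | succ u ih =>
    rw [mul_add_one, ← add_assoc]
    by_cases hu : W u = .inr u
    · rw [hW.repCount_block_of_eq hu le_rfl]
      exact Nat.add_modEq_right.trans ih
    · rwa [hW.repCount_block_of_ne hu]

lemma isAlternating_blockRel (hW : IsVariableWord W) : IsAlternating l (· % l) (blockRel W) := by
  refine isAlternating_of_type_eq ?_ (fun x hx => ?_) fun y => ?_
  · refine (hW.2.image fun v _ v' _ h => ?_).mono (image_subset_iff.2 fun v hv =>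
      (hW.mem_minReps_block_iff (0 : Fin l)).2 hv)
    simpa [NeZero.ne l] using h
  · rcases le_or_gt x n with hxn | hxn
    · rw [hW.repCount_of_le (hxn.trans n.le_succ)]
    obtain ⟨u, s, rfl⟩ := exists_eq_block l hxn
    rw [hW.repCount_block_of_eq ((hW.mem_minReps_block_iff s).1 hx) s.isLt.le, block_mod]
    exact ((hW.repCount_block_modEq u).add_right s).symm
  · rw [hW.minRep_blockRel]
    exact blockMap_mod_le W y

lemma approx_blockRel (hW : IsVariableWord W) : approx n (blockRel W) = approx n ⊥ := by
  refine (approx_eq_of_forall_lt minReps_bot_infinite hW.isAlternating_blockRel.infinite ?_ ?_).symm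
  · rw [pRep_bot]
    exact hW.mem_minReps_of_le le_rfl
  · intro y hy
    rw [pRep_bot] at hy
    rw [minRep_bot, hW.minRep_blockRel, blockMap_of_le hy.le]

end IsVariableWord

/-- The infinite word that continues the finite word `w` with fresh variables. -/
def extendWord {α : Type*} (w : List α) (u : ℕ) : α ⊕ ℕ := (w[u]?).elim (.inr u) .inl

lemma extendWord_of_le {α : Type*} {w : List α} (h : w.length ≤ u) : extendWord w u = .inr u := by
  rw [extendWord, List.getElem?_eq_none h]
  rfl

lemma isVariableWord_extendWord {α : Type*} (w : List α) : IsVariableWord (extendWord w) := by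
  refine ⟨fun u v h => ?_, (Ici_infinite w.length).mono fun u => extendWord_of_le⟩
  rcases hu : w[u]? with _ | a
  · obtain rfl : u = v := by simpa only [extendWord, hu, Option.elim_none, Sum.inr.injEq] using h
    exact ⟨le_rfl, h⟩
  · simp only [extendWord, hu, Option.elim_some, reduceCtorEq] at h

lemma extendWord_instantiate {α : Type*} {W : ℕ → α ⊕ ℕ} (ρ : ℕ → α) (hu : u < v) :
    extendWord (instantiate ρ ((List.range v).map W)) u = .inl (Sum.elim id ρ (W u)) := by
  have hget : (instantiate ρ ((List.range v).map W))[u]? = some (Sum.elim id ρ (W u)) := by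
    rw [instantiate, List.map_map, List.getElem?_map, List.getElem?_range hu]
    rfl
  rw [extendWord, hget]
  rfl

lemma length_instantiate {α : Type*} (W : ℕ → α ⊕ ℕ) (ρ : ℕ → α) (v : ℕ) :
    (instantiate ρ ((List.range v).map W)).length = v := by
  rw [instantiate, List.length_map, List.length_map, List.length_range]

lemma pRep_succ_eq_block (hW : IsVariableWord W) (hF : IsAlternating l (· % l) F)
    (hFW : Coarsens F (blockRel W)) (hp : n < pRep F (n + 1)) :
    ∃ v, W v = .inr v ∧ pRep F (n + 1) = n + 1 + l * v := by
  obtain ⟨v, s, hv⟩ := exists_eq_block l hp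
  have hmem := hFW.minReps_subset (pRep_mem hF.infinite (n + 1))
  have hs : n + 1 + s ≡ n + 1 + 0 [MOD l] := by
    refine (block_mod n v s).symm.trans ?_
    rw [← hv]
    exact hF.type_pRep (n + 1)
  have hs0 : (s : ℕ) = 0 := (Nat.ModEq.add_left_cancel' _ hs).eq_of_lt_of_lt s.isLt (NeZero.pos l)
  rw [hv, hW.mem_minReps_block_iff] at hmem
  rw [hs0] at hv
  exact ⟨v, hmem, hv⟩

lemma minRep_le_pRep_of_lt (hF : (minReps F).Infinite) (hy : y < pRep F (n + 1)) :
    minRep F y ≤ pRep F n := by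
  have hlt := (minRep_le F y).trans_lt hy
  rw [← pRep_repCount (minRep_mem F y)] at hlt ⊢
  exact (pRep_strictMono hF).monotone
    (Nat.le_of_lt_succ ((pRep_strictMono hF).lt_iff_lt.1 hlt))

lemma pRep_eq_self_of_approx_eq_bot (hF : (minReps F).Infinite) (h : approx n F = approx n ⊥) :
    pRep F n = n := by
  rw [((approx_eq_approx_iff hF minReps_bot_infinite).1 h).2.1, pRep_bot]

lemma minRep_eq_self_of_approx_eq_bot (hF : (minReps F).Infinite) (h : approx n F = approx n ⊥)
    (hy : y ≤ n) : minRep F y = y := by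
  have hp := pRep_eq_self_of_approx_eq_bot hF h
  rcases hy.eq_or_lt with rfl | hy
  · rw [← mem_minReps_iff, ← hp]
    exact pRep_mem hF _
  · rw [((approx_eq_approx_iff hF minReps_bot_infinite).1 h).2.2 y (hp.symm ▸ hy), minRep_bot]

lemma minRep_eq_blockMap_instantiate (hW : IsVariableWord W) (hF : (minReps F).Infinite)
    (hFW : Coarsens F (blockRel W)) (happ : approx n F = approx n ⊥)
    (hpv : pRep F (n + 1) = n + 1 + l * v) {ρ : ℕ → Letter n l}
    (hρ : ∀ (v : ℕ) (s : Fin l), minRep F (n + 1 + l * v + s) ≤ n →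
      ((ρ v).1 s : ℕ) = minRep F (n + 1 + l * v + s)) (hy : y < pRep F (n + 1)) :
    minRep F y = blockMap (extendWord (instantiate ρ ((List.range v).map W))) y := by
  have hlow : minRep F y ≤ n :=
    (minRep_le_pRep_of_lt hF hy).trans_eq (pRep_eq_self_of_approx_eq_bot hF happ)
  rcases le_or_gt y n with hyn | hyn
  · rw [blockMap_of_le hyn, minRep_eq_self_of_approx_eq_bot hF happ hyn]
  obtain ⟨u, s, rfl⟩ := exists_eq_block l hyn
  have huv : u < v := lt_of_mul_lt_mul_left (by omega : l * u < l * v) (Nat.zero_le l)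
  rw [blockMap_inl (extendWord_instantiate ρ huv)]
  have hFW := coarsens_iff.1 hFW (n + 1 + l * u + s)
  rw [hW.minRep_blockRel] at hFW
  rcases hu : W u with σ | v'
  · rw [blockMap_inl hu, minRep_eq_self_of_approx_eq_bot hF happ
      (Nat.le_of_lt_succ (σ.1 s).isLt)] at hFW
    exact hFW.symm
  · rw [blockMap_inr hu] at hFW
    rw [← hFW]
    exact (hρ v' s (hFW.trans_le hlow)).symm

lemma exists_approx_eq_instantiate (hW : IsVariableWord W) (hF : IsAlternating l (· % l) F)
    (hFW : Coarsens F (blockRel W)) (happ : approx n F = approx n ⊥) :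
    ∃ v, W v = .inr v ∧ ∃ ρ : ℕ → Letter n l, approx (n + 1) F =
      approx (n + 1) (blockRel (extendWord (instantiate ρ ((List.range v).map W)))) := by
  have hp : n < pRep F (n + 1) := le_pRep hF.infinite (n + 1)
  obtain ⟨v, hv, hpv⟩ := pRep_succ_eq_block hW hF hFW hp
  obtain ⟨ρ, hρ⟩ := exists_letters hF n
  have hext := isVariableWord_extendWord (instantiate ρ ((List.range v).map W))
  refine ⟨v, hv, ρ, approx_eq_of_forall_lt hF.infinite hext.isAlternating_blockRel.infinite ?_ ?_⟩
  · rw [hpv]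
    refine (hext.mem_minReps_block_iff (0 : Fin l)).2 (extendWord_of_le ?_)
    exact (length_instantiate W ρ v).le
  · intro y hy
    rw [hext.minRep_blockRel]
    exact minRep_eq_blockMap_instantiate hW hF.infinite hFW happ hpv hρ hy

lemma exists_homogeneous_bot (l : ℕ) [NeZero l] (n : ℕ) (O : Set (Set (ℕ × ℕ))) :
    ∃ A, IsAlternating l (· % l) A ∧ approx n A = approx n ⊥ ∧
      ((∀ F, IsAlternating l (· % l) F → Coarsens F A → approx n F = approx n ⊥ →
          approx (n + 1) F ∈ O) ∨
        ∀ F, IsAlternating l (· % l) F → Coarsens F A → approx n F = approx n ⊥ →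
          approx (n + 1) F ∉ O) := by
  obtain ⟨W, hW, h⟩ := carlson_simpson
    {w : List (Letter n l) | approx (n + 1) (blockRel (extendWord w)) ∈ O}
  refine ⟨blockRel W, hW.isAlternating_blockRel, hW.approx_blockRel, h.imp ?_ ?_⟩ <;>
  · intro h F hF hFW happ
    obtain ⟨v, hv, ρ, hρ⟩ := exists_approx_eq_instantiate hW hF hFW happ
    rw [hρ]
    exact h v hv ρ

theorem exists_homogeneous (hB : IsAlternating l ty B) (n : ℕ)
    (O : Set (Set (ℕ × ℕ))) : ∃ A, IsAlternating l ty A ∧ Coarsens A B ∧ approx n A = approx n B ∧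
      ((∀ F, IsAlternating l ty F → Coarsens F A → approx n F = approx n B →
          approx (n + 1) F ∈ O) ∨
        ∀ F, IsAlternating l ty F → Coarsens F A → approx n F = approx n B →
          approx (n + 1) F ∉ O) := by
  obtain ⟨A, hA, happ, h⟩ := exists_homogeneous_bot l n {a | ∃ E, IsAlternating l (· % l) E ∧
    approx (n + 1) E = a ∧ approx (n + 1) (mergeClasses B E) ∈ O}
  have htransfer (F : Setoid ℕ) (hF : IsAlternating l ty F) (hFA : Coarsens F (mergeClasses B A))
      (hFB : approx n F = approx n B) : ∃ E, mergeClasses B E = F ∧ IsAlternating l (· % l) E ∧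
        Coarsens E A ∧ approx n E = approx n ⊥ := by
    have hcomap := mergeClasses_comap (hFA.trans (coarsens_mergeClasses B A))
    rw [← hcomap] at hF hFA hFB
    rw [isAlternating_mergeClasses_iff hB] at hF
    refine ⟨_, hcomap, hF, coarsens_of_mergeClasses hB.infinite hFA, ?_⟩
    exact (approx_mergeClasses_eq_self_iff hB.infinite hF.infinite).1 hFB
  refine ⟨mergeClasses B A, (isAlternating_mergeClasses_iff hB).2 hA, coarsens_mergeClasses B A,
    (approx_mergeClasses_eq_self_iff hB.infinite hA.infinite).2 happ, h.imp ?_ ?_⟩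
  · intro h F hF hFA hFB
    obtain ⟨E, rfl, hE, hEA, hEn⟩ := htransfer F hF hFA hFB
    obtain ⟨E', hE', heq, hO⟩ := h E hE hEA hEn
    rwa [← (approx_mergeClasses_eq_iff hB.infinite hE'.infinite hE.infinite).2 heq]
  · intro h F hF hFA hFB hO
    obtain ⟨E, rfl, hE, hEA, hEn⟩ := htransfer F hF hFA hFB
    exact h E hE hEA hEn ⟨E, hE, rfl, hO⟩

/-! ### The space of alternating equivalence relations -/

lemma exists_piece_index {ι X : Type*} {P : ι → Set X} (hdisj : ∀ i j, i ≠ j → Disjoint (P i) (P j))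
    (hcov : ⋃ i, P i = univ) : ∃ t : X → ι, ∀ y i, y ∈ P i ↔ t y = i := by
  have hmem (y : X) : ∃ i, y ∈ P i := mem_iUnion.1 (hcov ▸ mem_univ y)
  choose t ht using hmem
  refine ⟨t, fun y i => ⟨fun hy => ?_, fun h => h ▸ ht y⟩⟩
  by_contra hne
  exact (hdisj _ _ hne).notMem_of_mem_left (ht y) hy

/-- The alternating equivalence relations as an abstract topological Ramsey space. -/
noncomputable def alternatingRamseySpace {S : Set (Setoid ℕ)}
    (hS : ∀ E, E ∈ S ↔ IsAlternating l ty E) : RamseySpace ↥S (Set (ℕ × ℕ)) where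
  le F E := Coarsens F.1 E.1
  r n E := approx n E.1
  leFin := FinCoarsens
  le_refl A := coarsens_refl A.1
  le_trans := Coarsens.trans
  length_eq {_ _ F G} h := ((approx_eq_approx_iff ((hS _).1 F.2).infinite
    ((hS _).1 G.2).infinite).1 h).1
  r_eq_of_le {_ _ F G} := approx_eq_of_le ((hS _).1 F.2).infinite ((hS _).1 G.2).infinite
  finite_leFin d B := finite_finCoarsens_approx d B.1
  exists_leFin {F _} hFB n :=
    ⟨_, finCoarsens_approx_of_coarsens ((hS _).1 F.2).infinite hFB n⟩
  exists_leFin_of_le {F B _ _ _} :=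
    exists_finCoarsens_of_le ((hS _).1 F.2).infinite ((hS _).1 B.2).infinite
  exists_extension {F B _ _} h := by
    obtain ⟨G, hG, hGB, hGF⟩ := exists_coarsens_approx_eq ((hS _).1 F.2) ((hS _).1 B.2) h
    exact ⟨⟨G, (hS G).2 hG⟩, hGB, hGF⟩
  exists_amalgam {A B _ _} hAB h := by
    obtain ⟨A', hA', hA'B, hrA', hle⟩ :=
      exists_alternating_amalgam ((hS _).1 A.2) ((hS _).1 B.2) hAB h
    exact ⟨⟨A', (hS A').2 hA'⟩, hA'B, hrA', fun F => hle F.1 ((hS _).1 F.2)⟩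
  exists_fusion {A d} h := by
    have hA : IsFusionSequence l ty d fun i => (A i).1 :=
      ⟨fun i => (hS _).1 (A i).2, fun i => (h i).1, fun i => (h i).2⟩
    exact ⟨⟨_, (hS _).2 hA.isAlternating_fusion⟩,
      fun i => ⟨hA.coarsens_fusion i, hA.approx_fusion i⟩⟩
  exists_homogeneous n B O := by
    obtain ⟨A, hA, hAB, hrA, h⟩ := exists_homogeneous ((hS _).1 B.2) n O
    exact ⟨⟨A, (hS A).2 hA⟩, hAB, hrA, h.imp (fun h F => h F.1 ((hS _).1 F.2))
      fun h F => h F.1 ((hS _).1 F.2)⟩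

end AlternatingRelations

theorem EPalt'IsTopologicalRamseySpace_general
    (l : ℕ) (hl : 0 < l) (P : Fin l → Set ℕ)
    (hdisj : ∀ i j, i ≠ j → Disjoint (P i) (P j))
    (hcov : ⋃ i, P i = Set.univ)
    (X : Set ↥(EPalt' l hl P)) :
    (HasBP (EPalt' l hl P) X ↔ IsRamsey (EPalt' l hl P) X) ∧
    (@IsMeagre _ (ellentuckTop (EPalt' l hl P)) X ↔ IsRamseyNull (EPalt' l hl P) X) := by
  have : NeZero l := ⟨hl.ne'⟩
  obtain ⟨t, ht⟩ := exists_piece_index hdisj hcov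
  have hEPalt (E : Setoid ℕ) : E ∈ EPalt' l hl P ↔ IsAlternating l (fun y => t y) E :=
    mem_EPalt'_iff ht
  exact ⟨RamseySpace.baire_iff_ramsey (S := alternatingRamseySpace hEPalt),
    RamseySpace.isMeagre_iff_ramseyNull (S := alternatingRamseySpace hEPalt)⟩

/-- **Theorem 3.4:** `(𝓔^{P'}_∞, ≤, r)` is a topological Ramsey space. -/
theorem EPalt'IsTopologicalRamseySpace
    (l : ℕ) (hl : 0 < l) (P : Fin l → Set ℕ)
    (hinf : ∀ i, (P i).Infinite)
    (hdisj : ∀ i j, i ≠ j → Disjoint (P i) (P j))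
    (hcov : ⋃ i, P i = Set.univ)
    (hmin : ∀ i j : Fin l, i < j → sInf (P i) < sInf (P j))
    (X : Set ↥(EPalt' l hl P)) :
    (HasBP (EPalt' l hl P) X ↔ IsRamsey (EPalt' l hl P) X) ∧
    (@IsMeagre _ (ellentuckTop (EPalt' l hl P)) X ↔ IsRamseyNull (EPalt' l hl P) X) := by
  exact EPalt'IsTopologicalRamseySpace_general l hl P hdisj hcov X

end DualRamsey
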